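/- Let d ≥ 3, let Ω ⊂ ℝ^d be a compact convex set of positive measure, let l ⊂ ℝ^d be a hyperplane through the origin, let u_l be a unit vector orthogonal to l, and let H ⊂ ℝ be a uniformly discrete set. Then the union of parallel hyperplanes P = l + H u_l = ⋃_{a∈H} (l + a·u_l) is a sampling set for B_Ω if and only if D⁻(H)·u_l ∉ Ω − Ω. -/

import Mathlib

open MeasureTheory FourierTransform Filter Metric
open scoped Pointwise RealInnerProductSpace ENNReal NNReal

noncomputable section

variable {V : Type*} [NormedAddCommGroup V] [InnerProductSpace ℝ V]
  [FiniteDimensional ℝ V] [MeasurableSpace V] [BorelSpace V]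

/-- `f` belongs to the Bernstein space `B_Ω`: it is a continuous bounded function which is the
inverse Fourier transform of a tempered distribution supported in `Ω`, i.e. its distributional
Fourier transform annihilates every test function whose support is disjoint from `Ω`. -/
def MemBernstein (Ω : Set V) (f : V → ℂ) : Prop :=
  Continuous f ∧ (∃ C, ∀ x, ‖f x‖ ≤ C) ∧
    ∀ ψ : V → ℂ, ContDiff ℝ (⊤ : ℕ∞) ψ → HasCompactSupport ψ → tsupport ψ ∩ Ω = ∅ →
      ∫ x, f x * 𝓕 ψ x = 0

/-- `P` is a sampling set for the Bernstein space `B_Ω`: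
`‖f‖_∞ ≤ C · sup_{x ∈ P} ‖f x‖` for all `f ∈ B_Ω`. -/
def IsSamplingSet (Ω P : Set V) : Prop :=
  ∃ C > 0, ∀ f : V → ℂ, MemBernstein Ω f →
    ∀ x : V, ‖f x‖ ≤ C * sSup ((fun p => ‖f p‖) '' P)

/-- A set is uniformly discrete if distinct points are separated by a fixed positive distance. -/
def UniformlyDiscrete {X : Type*} [PseudoMetricSpace X] (Λ : Set X) : Prop :=
  ∃ δ > 0, ∀ x ∈ Λ, ∀ y ∈ Λ, x ≠ y → δ ≤ dist x y

/-- The lower uniform (Beurling) density of a set: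
`D⁻(Λ) = lim_{r→∞} inf_x #(Λ ∩ B_r(x)) / |B_r(x)|`. -/
def lowerUniformDensity {X : Type*} [NormedAddCommGroup X] [MeasureSpace X] (Λ : Set X) : ℝ :=
  liminf (fun r : ℝ => ⨅ x : X,
    (Nat.card ↥(Λ ∩ closedBall x r) : ℝ) / (volume (closedBall x r)).toReal) atTop

open Topology Set

section Fourier

lemma HasCompactSupport.integrable_fourier {ψ : V → ℂ} (hc : HasCompactSupport ψ)
    (hψ : ContDiff ℝ (⊤ : ℕ∞) ψ) : Integrable (𝓕 ψ) :=
  (𝓕 (hc.toSchwartzMap hψ)).integrable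

lemma HasCompactSupport.continuous_fourier {ψ : V → ℂ} (hc : HasCompactSupport ψ)
    (hψ : ContDiff ℝ (⊤ : ℕ∞) ψ) : Continuous (𝓕 ψ) :=
  (𝓕 (hc.toSchwartzMap hψ)).continuous

lemma HasCompactSupport.integrable_of_contDiff {ψ : V → ℂ} (hc : HasCompactSupport ψ)
    (hψ : ContDiff ℝ (⊤ : ℕ∞) ψ) : Integrable ψ :=
  hψ.continuous.integrable_of_hasCompactSupport hc

lemma HasCompactSupport.integral_fourier_mul_exp {ψ : V → ℂ} (hc : HasCompactSupport ψ)
    (hψ : ContDiff ℝ (⊤ : ℕ∞) ψ) (x : V) :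
    ∫ t, Complex.exp (↑(2 * Real.pi * ⟪t, x⟫) * Complex.I) * 𝓕 ψ t = ψ x := by
  have h := (hc.integrable_of_contDiff hψ).fourierInv_fourier_eq
    (hc.integrable_fourier hψ) hψ.continuous.continuousAt (v := x)
  rw [Real.fourierInv_eq'] at h
  simpa [smul_eq_mul] using h

lemma HasCompactSupport.integral_fourier {ψ : V → ℂ} (hc : HasCompactSupport ψ)
    (hψ : ContDiff ℝ (⊤ : ℕ∞) ψ) : ∫ t, 𝓕 ψ t = ψ 0 := by
  simpa using hc.integral_fourier_mul_exp hψ 0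

lemma fourier_exp_mul (ψ : V → ℂ) (x t : V) :
    𝓕 (fun s => Complex.exp (↑(2 * Real.pi * ⟪s, x⟫) * Complex.I) * ψ s) t = 𝓕 ψ (t - x) := by
  simp only [Real.fourier_eq', smul_eq_mul]
  congr 1 with s
  rw [← mul_assoc, ← Complex.exp_add, inner_sub_right]
  congr 2
  push_cast
  ring

lemma fourier_comp_add_right (ψ : V → ℂ) (c t : V) :
    𝓕 (fun s => ψ (s + c)) t
      = Complex.exp (↑(2 * Real.pi * ⟪c, t⟫) * Complex.I) * 𝓕 ψ t := by
  simp only [Real.fourier_eq', smul_eq_mul]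
  rw [← integral_const_mul]
  refine Eq.trans ?_ (integral_add_right_eq_self _ c)
  congr 1 with s
  rw [← mul_assoc, ← Complex.exp_add, inner_add_left]
  congr 2
  push_cast
  ring

lemma fourier_comp_inv_smul (ψ : V → ℂ) {c : ℝ} (hc : 0 < c) (t : V) :
    𝓕 (fun s => ψ (c⁻¹ • s)) t = ((c ^ Module.finrank ℝ V : ℝ) : ℂ) * 𝓕 ψ (c • t) := by
  simp only [Real.fourier_eq', smul_eq_mul]
  have := Measure.integral_comp_inv_smul_of_nonneg (volume : Measure V)
    (fun s => Complex.exp (↑(-2 * Real.pi * ⟪s, c • t⟫) * Complex.I) * ψ s) hc.le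
  rw [Complex.real_smul] at this
  rw [← this]
  congr 1 with s
  rw [inner_smul_left, inner_smul_right]
  simp only [map_inv₀, conj_trivial]
  rw [inv_mul_cancel_left₀ hc.ne']

end Fourier

namespace MemBernstein

variable {Ω : Set V} {f : V → ℂ}

lemma integrable_mul (hf : MemBernstein Ω f) {k : V → ℂ} (hk : Integrable k) :
    Integrable (fun t => f t * k t) := by
  obtain ⟨C, hC⟩ := hf.2.1
  exact hk.bdd_mul hf.1.aestronglyMeasurable (ae_of_all _ hC)

/-- Bernstein spaces are translation invariant. -/
lemma translate (hf : MemBernstein Ω f) (x : V) : MemBernstein Ω (fun t => f (x + t)) := by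
  obtain ⟨hcont, ⟨C, hC⟩, hs⟩ := hf
  refine ⟨by fun_prop, ⟨C, fun t => hC _⟩, fun ψ hψ hc hd => ?_⟩
  have he : ContDiff ℝ (⊤ : ℕ∞)
      (fun s => Complex.exp (↑(2 * Real.pi * ⟪s, x⟫) * Complex.I) * ψ s) := by
    have : ContDiff ℝ (⊤ : ℕ∞) (fun s : V => (↑(2 * Real.pi * ⟪s, x⟫) : ℂ)) :=
      Complex.ofRealCLM.contDiff.comp (contDiff_const.mul (contDiff_id.inner ℝ contDiff_const))
    fun_prop
  have hsub : tsupport (fun s => Complex.exp (↑(2 * Real.pi * ⟪s, x⟫) * Complex.I) * ψ s)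
      ⊆ tsupport ψ := tsupport_mul_subset_right
  have := hs _ he hc.mul_left (by
    rw [← subset_empty_iff, ← hd]; exact inter_subset_inter_left _ hsub)
  simp only [fourier_exp_mul] at this
  rw [← this]
  refine Eq.trans ?_ (integral_add_left_eq_self _ x)
  simp

/-- Modulation translates the spectrum. -/
lemma modulate (hf : MemBernstein Ω f) (c : V) {Ω' : Set V} (hΩ : ∀ s ∈ Ω, s + c ∈ Ω') :
    MemBernstein Ω' (fun t => Complex.exp (↑(2 * Real.pi * ⟪c, t⟫) * Complex.I) * f t) := by
  obtain ⟨hcont, ⟨C, hC⟩, hs⟩ := hf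
  refine ⟨by fun_prop, ⟨C, fun t => ?_⟩, fun ψ hψ hc hd => ?_⟩
  · rw [norm_mul, Complex.norm_exp_ofReal_mul_I, one_mul]; exact hC t
  have hd' : tsupport (fun s => ψ (s + c)) ∩ Ω = ∅ := by
    rw [eq_empty_iff_forall_notMem]
    rintro s ⟨h1, h2⟩
    have : s + c ∈ tsupport ψ :=
      (tsupport_comp_subset_preimage ψ (f := fun s => s + c) (by fun_prop)) h1
    exact (eq_empty_iff_forall_notMem.1 hd) _ ⟨this, hΩ s h2⟩
  have hc' : HasCompactSupport (fun s => ψ (s + c)) :=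
    hc.comp_homeomorph (Homeomorph.addRight c)
  have := hs (fun s => ψ (s + c)) (hψ.comp (by fun_prop)) hc' hd'
  simp only [fourier_comp_add_right] at this
  rw [← this]
  congr 1 with t
  ring

lemma of_tendsto {F : ℕ → V → ℂ} (hF : ∀ n, MemBernstein Ω (F n)) {M : ℝ}
    (hM : ∀ n x, ‖F n x‖ ≤ M) (hf : Continuous f)
    (hlim : ∀ x, Tendsto (fun n => F n x) atTop (𝓝 (f x))) : MemBernstein Ω f := by
  refine ⟨hf, ⟨M, fun x => le_of_tendsto (hlim x).norm (Eventually.of_forall (hM · x))⟩,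
    fun ψ hψ hc hd => ?_⟩
  have h := tendsto_integral_of_dominated_convergence (μ := volume)
    (F := fun n x => F n x * 𝓕 ψ x) (f := fun x => f x * 𝓕 ψ x) (fun x => M * ‖𝓕 ψ x‖)
    (fun n => ((hF n).integrable_mul (hc.integrable_fourier hψ)).aestronglyMeasurable)
    ((hc.integrable_fourier hψ).norm.const_mul M)
    (fun n => ae_of_all _ fun x => by rw [norm_mul]; gcongr; exact hM n x)
    (ae_of_all _ fun x => (hlim x).mul_const _)
  have h0 := fun n => (hF n).2.2 ψ hψ hc hd
  simp only [h0] at h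
  exact tendsto_nhds_unique h tendsto_const_nhds

lemma exp {c : V} (hc : c ∈ Ω) :
    MemBernstein Ω (fun t => Complex.exp (↑(2 * Real.pi * ⟪t, c⟫) * Complex.I)) := by
  refine ⟨by fun_prop, ⟨1, fun t => (Complex.norm_exp_ofReal_mul_I _).le⟩,
    fun ψ hψ hcs hd => ?_⟩
  rw [hcs.integral_fourier_mul_exp hψ]
  by_contra h
  exact (eq_empty_iff_forall_notMem.1 hd) c ⟨subset_tsupport _ h, hc⟩

lemma zero : MemBernstein Ω (fun _ : V => (0 : ℂ)) :=
  ⟨continuous_const, ⟨0, by simp⟩, by simp⟩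

lemma add {g : V → ℂ} (hf : MemBernstein Ω f) (hg : MemBernstein Ω g) :
    MemBernstein Ω (fun t => f t + g t) := by
  obtain ⟨C, hC⟩ := hf.2.1
  obtain ⟨D, hD⟩ := hg.2.1
  refine ⟨hf.1.add hg.1, ⟨C + D, fun t => norm_add_le_of_le (hC t) (hD t)⟩,
    fun ψ hψ hc hd => ?_⟩
  simp only [add_mul]
  rw [integral_add (hf.integrable_mul (hc.integrable_fourier hψ))
    (hg.integrable_mul (hc.integrable_fourier hψ)), hf.2.2 ψ hψ hc hd, hg.2.2 ψ hψ hc hd, add_zero]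

lemma const_mul (hf : MemBernstein Ω f) (a : ℂ) : MemBernstein Ω (fun t => a * f t) := by
  obtain ⟨C, hC⟩ := hf.2.1
  refine ⟨by have := hf.1; fun_prop, ⟨‖a‖ * C, fun t => ?_⟩, fun ψ hψ hc hd => ?_⟩
  · rw [norm_mul]; gcongr; exact hC t
  · simp only [mul_assoc]
    rw [integral_const_mul, hf.2.2 ψ hψ hc hd, mul_zero]

/-- Functions in a Bernstein space are reproduced by convolution with the Fourier transform of a
cutoff function which equals `1` near the spectrum. -/
lemma eq_integral_mul_fourier (hf : MemBernstein Ω f) {χ : V → ℂ}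
    (hχ : ContDiff ℝ (⊤ : ℕ∞) χ) (hc : HasCompactSupport χ)
    (hd : tsupport (fun s => 1 - χ s) ∩ Ω = ∅) (x : V) :
    f x = ∫ t, f (x + t) * 𝓕 χ t := by
  suffices H : ∀ g, MemBernstein Ω g → g 0 = ∫ t, g t * 𝓕 χ t by
    simpa using H _ (hf.translate x)
  intro f hf
  obtain ⟨C, hC⟩ := hf.2.1
  let b : ContDiffBump (0 : V) := ⟨1, 2, one_pos, one_lt_two⟩
  let ρ : V → ℂ := fun s => (b s : ℂ)
  have hρ : ContDiff ℝ (⊤ : ℕ∞) ρ := Complex.ofRealCLM.contDiff.comp b.contDiff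
  have hρc : HasCompactSupport ρ := b.hasCompactSupport.comp_left Complex.ofReal_zero
  have hρ0 : ρ 0 = 1 := by
    simp only [ρ]
    rw [b.one_of_mem_closedBall (by simp [b.rIn_pos.le])]; simp
  let R : ℕ → ℝ := fun n => n + 1
  have hR : ∀ n, 0 < R n := fun n => by positivity
  have hRtop : Tendsto R atTop atTop := tendsto_atTop_add_const_right _ _ tendsto_natCast_atTop_atTop
  let r : ℕ → V → ℂ := fun n s => ρ ((R n)⁻¹ • s)
  have hr : ∀ n, ContDiff ℝ (⊤ : ℕ∞) (r n) := fun n => hρ.comp (by fun_prop)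
  have hrc : ∀ n, HasCompactSupport (r n) := fun n =>
    hρc.comp_homeomorph (Homeomorph.smulOfNeZero ((R n)⁻¹) (inv_ne_zero (hR n).ne'))
  have hlim : Tendsto (fun n => ∫ t, f t * 𝓕 (r n) t) atTop (𝓝 (f 0)) := by
    have h1 : ∀ n, ∫ t, f t * 𝓕 (r n) t = ∫ t, f ((R n)⁻¹ • t) * 𝓕 ρ t := by
      intro n
      simp only [r, fourier_comp_inv_smul ρ (hR n)]
      have := Measure.integral_comp_smul_of_nonneg (volume : Measure V)
        (fun t => f ((R n)⁻¹ • t) * 𝓕 ρ t) (R n) (hR := (hR n).le)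
      simp only [inv_smul_smul₀ (hR n).ne'] at this
      have hne : ((R n ^ Module.finrank ℝ V : ℝ) : ℂ) ≠ 0 := by
        exact_mod_cast (pow_pos (hR n) _).ne'
      calc ∫ t, f t * (((R n ^ Module.finrank ℝ V : ℝ) : ℂ) * 𝓕 ρ (R n • t))
          = ((R n ^ Module.finrank ℝ V : ℝ) : ℂ) * ∫ t, f t * 𝓕 ρ (R n • t) := by
            rw [← integral_const_mul]; congr 1 with t; ring
        _ = _ := by
            rw [this, Complex.real_smul, Complex.ofReal_inv, mul_inv_cancel_left₀ hne]
    simp only [h1]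
    have h2 : f 0 = ∫ t, f 0 * 𝓕 ρ t := by
      rw [integral_const_mul, hρc.integral_fourier hρ, hρ0, mul_one]
    rw [h2]
    refine tendsto_integral_of_dominated_convergence (fun t => C * ‖𝓕 ρ t‖) (fun n => ?_)
      ((hρc.integrable_fourier hρ).norm.const_mul C) (fun n => ae_of_all _ fun t => ?_)
      (ae_of_all _ fun t => ?_)
    · have := hf.1
      exact (Continuous.aestronglyMeasurable (by fun_prop)).mul
        (hρc.integrable_fourier hρ).aestronglyMeasurable
    · rw [norm_mul]; gcongr; exact hC _
    · refine Tendsto.mul_const _ ?_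
      have : Tendsto (fun n => (R n)⁻¹ • t) atTop (𝓝 ((0 : ℝ) • t)) :=
        (tendsto_inv_atTop_zero.comp hRtop).smul_const t
      rw [zero_smul] at this
      exact (hf.1.tendsto 0).comp this
  -- eventually they agree with the reproducing formula
  obtain ⟨N, hN⟩ := hc.isCompact.isBounded.subset_closedBall (0 : V)
  have hev : ∀ᶠ n in atTop, ∫ t, f t * 𝓕 (r n) t = ∫ t, f t * 𝓕 χ t := by
    filter_upwards [hRtop.eventually_ge_atTop N] with n hn
    have hχr : ∀ s, χ s * r n s = χ s := by
      intro s
      by_cases hs : χ s = 0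
      · simp [hs]
      have hsN := hN (subset_tsupport _ hs)
      rw [mem_closedBall_zero_iff] at hsN
      have : r n s = 1 := by
        simp only [r, ρ]
        rw [b.one_of_mem_closedBall, Complex.ofReal_one]
        rw [mem_closedBall_zero_iff, norm_smul, norm_inv, Real.norm_of_nonneg (hR n).le]
        change _ ≤ (1 : ℝ)
        rw [inv_mul_le_one₀ (hR n)]
        exact hsN.trans hn
      rw [this, mul_one]
    have hψ : ContDiff ℝ (⊤ : ℕ∞) (fun s => (1 - χ s) * r n s) :=
      (contDiff_const.sub hχ).mul (hr n)
    have h0 := hf.2.2 _ hψ (hrc n).mul_left (by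
      rw [← subset_empty_iff, ← hd]
      exact inter_subset_inter_left _ tsupport_mul_subset_left)
    have h3 : ∀ t, 𝓕 (fun s => (1 - χ s) * r n s) t = 𝓕 (r n) t - 𝓕 χ t := by
      intro t
      simp only [Real.fourier_eq, sub_mul, hχr, one_mul, smul_sub]
      exact integral_sub
        ((Real.fourierIntegral_convergent_iff t).2 ((hrc n).integrable_of_contDiff (hr n)))
        ((Real.fourierIntegral_convergent_iff t).2 (hc.integrable_of_contDiff hχ))
    simp only [h3, mul_sub] at h0
    rw [integral_sub (hf.integrable_mul ((hrc n).integrable_fourier (hr n)))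
      (hf.integrable_mul (hc.integrable_fourier hχ)), sub_eq_zero] at h0
    exact h0
  exact tendsto_nhds_unique hlim (tendsto_const_nhds.congr' (hev.mono fun n hn => hn.symm))

end MemBernstein

/-- The Fourier–Laplace transform `w ↦ ∫ φ(s) e^{-2πisw} ds`. -/
def fourierLaplace (φ : ℝ → ℂ) (w : ℂ) : ℂ :=
  ∫ s : ℝ, φ s * Complex.exp (-(2 * Real.pi * s * Complex.I) * w)

lemma norm_exp_fourierLaplace (s : ℝ) (w : ℂ) :
    ‖Complex.exp (-(2 * Real.pi * s * Complex.I) * w)‖ = Real.exp (2 * Real.pi * s * w.im) := by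
  rw [Complex.norm_exp]
  congr 1
  simp

lemma fourierLaplace_ofReal (φ : ℝ → ℂ) (t : ℝ) : fourierLaplace φ t = 𝓕 φ t := by
  rw [fourierLaplace, Real.fourier_eq']
  congr 1 with s
  rw [smul_eq_mul, mul_comm]
  congr 2
  simp
  ring

lemma norm_exp_le_of_mem_tsupport {φ : ℝ → ℂ} {τ : ℝ} (hτ : ∀ s ∈ tsupport φ, |s| ≤ τ)
    {ψ : ℝ → ℂ} (hψ : ∀ s, s ∉ tsupport φ → ψ s = 0) (s : ℝ) (w : ℂ) :
    ‖ψ s * Complex.exp (-(2 * Real.pi * s * Complex.I) * w)‖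
      ≤ ‖ψ s‖ * Real.exp (2 * Real.pi * τ * |w.im|) := by
  by_cases hs : s ∈ tsupport φ
  · rw [norm_mul, norm_exp_fourierLaplace]
    gcongr ?_ * Real.exp ?_
    have h1 : s * w.im ≤ τ * |w.im| :=
      (le_abs_self _).trans (by rw [abs_mul]; gcongr; exact hτ s hs)
    nlinarith [Real.pi_pos]
  · simp [hψ s hs]

lemma integrable_fourierLaplace {φ : ℝ → ℂ} (hc : HasCompactSupport φ) (hφ : Continuous φ)
    (w : ℂ) : Integrable (fun s : ℝ => φ s * Complex.exp (-(2 * Real.pi * s * Complex.I) * w)) :=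
  Continuous.integrable_of_hasCompactSupport (by fun_prop) hc.mul_right

lemma norm_fourierLaplace_le {φ : ℝ → ℂ} (hc : HasCompactSupport φ) (hφ : Continuous φ)
    {τ : ℝ} (hτ : ∀ s ∈ tsupport φ, |s| ≤ τ) (w : ℂ) :
    ‖fourierLaplace φ w‖ ≤ (∫ s, ‖φ s‖) * Real.exp (2 * Real.pi * τ * |w.im|) := by
  rw [fourierLaplace, ← integral_mul_const]
  refine norm_integral_le_of_norm_le
    ((hφ.integrable_of_hasCompactSupport hc).norm.mul_const _) (ae_of_all _ fun s => ?_)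
  exact norm_exp_le_of_mem_tsupport hτ (fun s hs => image_eq_zero_of_notMem_tsupport hs) s w

lemma fourierLaplace_deriv {φ : ℝ → ℂ} (hc : HasCompactSupport φ)
    (hφ : ContDiff ℝ (⊤ : ℕ∞) φ) (w : ℂ) :
    fourierLaplace (deriv φ) w = 2 * Real.pi * Complex.I * w * fourierLaplace φ w := by
  have hd : Continuous (deriv φ) := hφ.continuous_deriv (by simp)
  have he : ∀ s : ℝ, HasDerivAt (fun s : ℝ => Complex.exp (-(2 * Real.pi * s * Complex.I) * w))
      (-(2 * Real.pi * Complex.I * w) * Complex.exp (-(2 * Real.pi * s * Complex.I) * w)) s := by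
    intro s
    have h1 : HasDerivAt (fun s : ℝ => -(2 * Real.pi * (s : ℂ) * Complex.I) * w)
        (-(2 * Real.pi * Complex.I * w)) s := by
      have := ((Complex.ofRealCLM.hasDerivAt (x := s)).const_mul (-(2 * Real.pi * Complex.I * w)))
      refine (this.congr_deriv (by simp)).congr_of_eventuallyEq
        (Eventually.of_forall fun s => ?_)
      simp only [Complex.ofRealCLM_apply]
      ring
    exact h1.cexp.congr_deriv (mul_comm _ _)
  have := integral_mul_deriv_eq_deriv_mul_of_integrable (u := φ) (u' := deriv φ)
    (fun s _ => (hφ.differentiable (by simp) s).hasDerivAt) (fun s _ => he s)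
    (Continuous.integrable_of_hasCompactSupport
      (hφ.continuous.mul (by fun_prop)) hc.mul_right)
    (integrable_fourierLaplace hc.deriv hd w)
    (integrable_fourierLaplace hc hφ.continuous w)
  rw [fourierLaplace, fourierLaplace, ← integral_const_mul, ← neg_eq_iff_eq_neg.2 this,
    ← integral_neg]
  congr 1 with s
  ring

lemma exists_norm_fourierLaplace_le {φ : ℝ → ℂ} (hc : HasCompactSupport φ)
    (hφ : ContDiff ℝ (⊤ : ℕ∞) φ) {τ : ℝ} (hτ : ∀ s ∈ tsupport φ, |s| ≤ τ) :
    ∃ C ≥ 0, ∀ w, ‖fourierLaplace φ w‖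
      ≤ C * Real.exp (2 * Real.pi * τ * |w.im|) * (1 + w.re ^ 2)⁻¹ := by
  have hφ1 : ContDiff ℝ (⊤ : ℕ∞) (deriv φ) := by
    exact (contDiff_infty_iff_deriv.1 hφ).2
  have hφ2 : ContDiff ℝ (⊤ : ℕ∞) (deriv (deriv φ)) := by
    exact (contDiff_infty_iff_deriv.1 hφ1).2
  have hsub : ∀ s ∈ tsupport (deriv (deriv φ)), |s| ≤ τ := fun s hs =>
    hτ s (tsupport_deriv_subset (𝕜 := ℝ) (tsupport_deriv_subset (𝕜 := ℝ) hs))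
  refine ⟨(∫ s, ‖φ s‖) + ∫ s, ‖deriv (deriv φ) s‖, by positivity, fun w => ?_⟩
  have h0 := norm_fourierLaplace_le hc hφ.continuous hτ w
  have h2 := norm_fourierLaplace_le hc.deriv.deriv hφ2.continuous hsub w
  rw [fourierLaplace_deriv hc.deriv hφ1, fourierLaplace_deriv hc hφ] at h2
  rw [← div_eq_mul_inv, le_div_iff₀ (by positivity)]
  have hre : w.re ^ 2 ≤ ‖w‖ ^ 2 := by
    rw [← sq_abs]; gcongr; exact Complex.abs_re_le_norm w
  have hpi : 1 ≤ 2 * Real.pi := by linarith [Real.pi_gt_three]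
  have h3 : w.re ^ 2 * ‖fourierLaplace φ w‖
      ≤ (∫ s, ‖deriv (deriv φ) s‖) * Real.exp (2 * Real.pi * τ * |w.im|) := by
    refine le_trans ?_ h2
    rw [← mul_assoc, norm_mul]
    gcongr
    refine hre.trans ?_
    simp only [norm_mul, Complex.norm_I, Complex.norm_real, Real.norm_eq_abs,
      abs_of_pos Real.pi_pos, Complex.norm_ofNat, mul_one]
    nlinarith [sq_nonneg ‖w‖, mul_le_mul hpi hpi zero_le_one (by linarith)]
  nlinarith

lemma hasDerivAt_fourierLaplace {φ : ℝ → ℂ} (hc : HasCompactSupport φ) (hφ : Continuous φ)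
    (w : ℂ) : HasDerivAt (fourierLaplace φ)
      (fourierLaplace (fun s => -(2 * Real.pi * s * Complex.I) * φ s) w) w := by
  obtain ⟨τ, hτ0, hτ⟩ : ∃ τ > 0, ∀ s ∈ tsupport φ, ‖s‖ ≤ τ :=
    (hc.isCompact.isBounded).exists_pos_norm_le
  have hc' : HasCompactSupport (fun s : ℝ => -(2 * Real.pi * s * Complex.I) * φ s) :=
    hc.mul_left
  have hφ' : Continuous (fun s : ℝ => -(2 * Real.pi * s * Complex.I) * φ s) := by fun_prop
  refine (hasDerivAt_integral_of_dominated_loc_of_deriv_le (s := ball w 1)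
    (F := fun z (s : ℝ) => φ s * Complex.exp (-(2 * Real.pi * s * Complex.I) * z))
    (F' := fun z (s : ℝ) => -(2 * Real.pi * s * Complex.I) * φ s *
      Complex.exp (-(2 * Real.pi * s * Complex.I) * z))
    (bound := fun s => ‖-(2 * Real.pi * s * Complex.I) * φ s‖ *
      Real.exp (2 * Real.pi * τ * (|w.im| + 1)))
    (ball_mem_nhds w one_pos) ?_ (integrable_fourierLaplace hc hφ w)
    (integrable_fourierLaplace hc' hφ' w).aestronglyMeasurable ?_ ?_ ?_).2
  · exact Eventually.of_forall fun z => (integrable_fourierLaplace hc hφ z).aestronglyMeasurable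
  · refine ae_of_all _ fun s z hz => ?_
    refine (norm_exp_le_of_mem_tsupport (ψ := fun s => -(2 * Real.pi * s * Complex.I) * φ s)
      hτ (fun s hs => ?_) s z).trans ?_
    · simp [image_eq_zero_of_notMem_tsupport hs]
    · gcongr
      have h1 : |z.im - w.im| ≤ 1 := by
        rw [← Complex.sub_im]
        exact (Complex.abs_im_le_norm _).trans (mem_ball_iff_norm.1 hz).le
      have := abs_sub_abs_le_abs_sub z.im w.im
      linarith
  · exact ((hφ'.integrable_of_hasCompactSupport hc').norm.mul_const _)
  · refine ae_of_all _ fun s z hz => ?_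
    have h1 : HasDerivAt (fun z : ℂ => -(2 * Real.pi * s * Complex.I) * z)
        (-(2 * Real.pi * s * Complex.I)) z := by
      simpa using (hasDerivAt_id z).const_mul (-(2 * Real.pi * s * Complex.I))
    exact (h1.cexp.const_mul (φ s)).congr_deriv (by ring)

lemma integrable_inv_one_add_sub_sq (a : ℝ) : Integrable (fun t : ℝ => (1 + (t - a) ^ 2)⁻¹) :=
  integrable_inv_one_add_sq.comp_sub_right a

lemma integral_inv_one_add_sub_sq (a : ℝ) : ∫ t : ℝ, (1 + (t - a) ^ 2)⁻¹ = Real.pi := by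
  rw [integral_sub_right_eq_self (fun t : ℝ => (1 + t ^ 2)⁻¹)]
  exact integral_univ_inv_one_add_sq

/-- Functions of the one-dimensional Bernstein space extend to entire functions of exponential
type, with uniform control of the extension and of its derivative. -/
lemma exists_entire_extension {σ τ : ℝ} (hσ : 0 ≤ σ) (hστ : σ < τ) :
    ∃ A > 0, ∀ f : ℝ → ℂ, MemBernstein (Icc (-σ) σ) f → ∀ G ≥ 0, (∀ x, ‖f x‖ ≤ G) →
      ∃ F : ℂ → ℂ, Differentiable ℂ F ∧ (∀ x : ℝ, F x = f x) ∧
        (∀ z, ‖F z‖ ≤ A * G * Real.exp (2 * Real.pi * τ * |z.im|)) ∧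
        (∀ z, ‖deriv F z‖ ≤ A * G * Real.exp (2 * Real.pi * τ * |z.im|)) := by
  let b : ContDiffBump (0 : ℝ) := ⟨(σ + τ) / 2, τ, by linarith, by linarith⟩
  let χ : ℝ → ℂ := fun s => (b s : ℂ)
  have hχ : ContDiff ℝ (⊤ : ℕ∞) χ := Complex.ofRealCLM.contDiff.comp b.contDiff
  have hc : HasCompactSupport χ := b.hasCompactSupport.comp_left Complex.ofReal_zero
  have hsupp : ∀ s ∈ tsupport χ, |s| ≤ τ := fun s hs => by
    have : s ∈ tsupport b := tsupport_comp_subset Complex.ofReal_zero _ hs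
    rw [b.tsupport_eq] at this
    simpa [b] using this
  have hone : tsupport (fun s => 1 - χ s) ∩ Icc (-σ) σ = ∅ := by
    rw [← Set.disjoint_iff_inter_eq_empty]
    have hsub : tsupport (fun s => 1 - χ s) ⊆ (ball (0 : ℝ) ((σ + τ) / 2))ᶜ := by
      refine closure_minimal (fun s hs hs' => hs ?_) isOpen_ball.isClosed_compl
      have : b s = 1 := b.one_of_mem_closedBall (ball_subset_closedBall hs')
      simp [χ, this]
    refine Set.disjoint_left.2 fun s hs hs' => hsub hs ?_
    rw [mem_ball_zero_iff, Real.norm_eq_abs]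
    have := abs_le.2 hs'
    linarith
  let χ' : ℝ → ℂ := fun s => -(2 * Real.pi * s * Complex.I) * χ s
  have hχ' : ContDiff ℝ (⊤ : ℕ∞) χ' := by
    refine ContDiff.mul ?_ hχ
    have : ContDiff ℝ (⊤ : ℕ∞) (fun s : ℝ => (s : ℂ)) := Complex.ofRealCLM.contDiff
    fun_prop
  have hc' : HasCompactSupport χ' := hc.mul_left
  obtain ⟨C, hC0, hC⟩ := exists_norm_fourierLaplace_le hc hχ hsupp
  obtain ⟨C', hC0', hC'⟩ := exists_norm_fourierLaplace_le hc' hχ' fun s hs =>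
    hsupp s (closure_mono (Function.support_mul_subset_right _ _) hs)
  have hcont : Continuous (fourierLaplace χ) :=
    (fun w => (hasDerivAt_fourierLaplace hc hχ.continuous w).continuousAt :
      ∀ w, ContinuousAt _ w) |> continuous_iff_continuousAt.2
  have hcont' : Continuous (fourierLaplace χ') :=
    (fun w => (hasDerivAt_fourierLaplace hc' hχ'.continuous w).continuousAt :
      ∀ w, ContinuousAt _ w) |> continuous_iff_continuousAt.2
  refine ⟨(C + C' + 1) * Real.pi, by positivity, fun f hf G hG0 hG => ?_⟩
  have bound : ∀ {K : ℂ → ℂ} {B : ℝ}, 0 ≤ B →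
      (∀ w, ‖K w‖ ≤ B * Real.exp (2 * Real.pi * τ * |w.im|) * (1 + w.re ^ 2)⁻¹) →
      ∀ (z : ℂ) (t : ℝ), ‖f t * K (t - z)‖
        ≤ G * B * Real.exp (2 * Real.pi * τ * |z.im|) * (1 + (t - z.re) ^ 2)⁻¹ := by
    intro K B hB hK z t
    rw [norm_mul]
    have := hK (t - z)
    simp only [Complex.sub_im, Complex.ofReal_im, zero_sub, abs_neg, Complex.sub_re,
      Complex.ofReal_re] at this
    calc _ ≤ G * (B * Real.exp (2 * Real.pi * τ * |z.im|) * (1 + (t - z.re) ^ 2)⁻¹) := by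
          gcongr; exact hG t
      _ = _ := by ring
  have bound' : ∀ {K : ℂ → ℂ} {B : ℝ}, 0 ≤ B → B ≤ C + C' + 1 →
      (∀ w, ‖K w‖ ≤ B * Real.exp (2 * Real.pi * τ * |w.im|) * (1 + w.re ^ 2)⁻¹) →
      ∀ z : ℂ, ‖∫ t : ℝ, f t * K (t - z)‖ ≤ (C + C' + 1) * Real.pi * G *
        Real.exp (2 * Real.pi * τ * |z.im|) := by
    intro K B hB hB' hK z
    refine (norm_integral_le_of_norm_le ((integrable_inv_one_add_sub_sq z.re).const_mul _)
      (ae_of_all _ (bound hB hK z))).trans ?_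
    rw [integral_const_mul, integral_inv_one_add_sub_sq]
    calc _ = G * B * (Real.exp (2 * Real.pi * τ * |z.im|) * Real.pi) := by ring
      _ ≤ G * (C + C' + 1) * (Real.exp (2 * Real.pi * τ * |z.im|) * Real.pi) := by gcongr
      _ = _ := by ring
  have hfc := hf.1
  have hmeas : ∀ {K : ℂ → ℂ}, Continuous K → ∀ z : ℂ,
      AEStronglyMeasurable (fun t : ℝ => f t * K (t - z)) := fun hK z =>
    Continuous.aestronglyMeasurable (by fun_prop)
  have hderiv : ∀ z : ℂ, HasDerivAt (fun z : ℂ => ∫ t : ℝ, f t * fourierLaplace χ (t - z))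
      (∫ t : ℝ, f t * (fun w => -fourierLaplace χ' w) (t - z)) z := by
    intro z
    refine (hasDerivAt_integral_of_dominated_loc_of_deriv_le (s := ball z 1)
      (F := fun w (t : ℝ) => f t * fourierLaplace χ (t - w))
      (F' := fun w (t : ℝ) => f t * (fun w => -fourierLaplace χ' w) (t - w))
      (bound := fun t => G * C' * Real.exp (2 * Real.pi * τ * (|z.im| + 1)) *
        (3 * (1 + (t - z.re) ^ 2)⁻¹))
      (ball_mem_nhds z one_pos) ?_ ?_ (hmeas (K := fun w => -fourierLaplace χ' w) (by fun_prop) z) ?_ ?_ ?_).2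
    · exact Eventually.of_forall fun w => hmeas hcont w
    · exact (((integrable_inv_one_add_sub_sq z.re).const_mul _).mono' (hmeas hcont z)
        (ae_of_all _ (bound hC0 hC z)))
    · refine ae_of_all _ fun t w hw => ?_
      refine (bound hC0' (K := fun w => -fourierLaplace χ' w)
        (fun w => by rw [norm_neg]; exact hC' w) w t).trans ?_
      have hw1 : ‖w - z‖ < 1 := mem_ball_iff_norm.1 hw
      have him : |w.im - z.im| ≤ 1 := by
        rw [← Complex.sub_im]
        exact (Complex.abs_im_le_norm _).trans hw1.le
      have hre : |w.re - z.re| ≤ 1 := by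
        rw [← Complex.sub_re]
        exact (Complex.abs_re_le_norm _).trans hw1.le
      have := abs_sub_abs_le_abs_sub w.im z.im
      have hτ0 : 0 ≤ τ := by linarith
      gcongr
      · linarith
      · rw [inv_le_iff_one_le_mul₀ (by positivity), mul_assoc, mul_comm, mul_assoc,
          ← div_eq_inv_mul, le_div_iff₀ (by positivity)]
        rw [abs_le] at hre
        nlinarith [sq_nonneg ((t - w.re) - (w.re - z.re))]
    · exact ((integrable_inv_one_add_sub_sq z.re).const_mul 3).const_mul _
    · refine ae_of_all _ fun t w _ => ?_
      have h1 : HasDerivAt (fun w : ℂ => (t : ℂ) - w) (-1) w := by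
        simpa using (hasDerivAt_id w).const_sub (t : ℂ)
      have := (hasDerivAt_fourierLaplace hc hχ.continuous ((t : ℂ) - w)).comp w h1
      exact (this.const_mul (f t)).congr_deriv (by simp [χ'])
  refine ⟨_, fun z => (hderiv z).differentiableAt, fun x => ?_, ?_, fun z => ?_⟩
  · rw [hf.eq_integral_mul_fourier hχ hc hone x]
    refine (integral_add_left_eq_self
      (fun t : ℝ => f t * fourierLaplace χ ((t : ℂ) - x)) x).symm.trans ?_
    congr 1 with t
    rw [← fourierLaplace_ofReal]
    congr 2
    push_cast
    ring
  · exact bound' hC0 (by linarith) hC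
  · rw [(hderiv z).deriv]
    exact bound' (K := fun w => -fourierLaplace χ' w) hC0' (by linarith)
      (fun w => by rw [norm_neg]; exact hC' w) z

lemma one_le_divisor_of_eq_zero {F : ℂ → ℂ} (hF : Differentiable ℂ F) {c z : ℂ} {U : Set ℂ}
    (hc : F c ≠ 0) (hz : F z = 0) (hzU : z ∈ U) : 1 ≤ MeromorphicOn.divisor F U z := by
  have han : AnalyticOnNhd ℂ F univ := fun w _ => hF.analyticAt w
  rw [MeromorphicOn.AnalyticOnNhd.divisor_apply (fun w _ => hF.analyticAt w) hzU]
  have h0 : analyticOrderAt F z ≠ 0 := (hF.analyticAt z).analyticOrderAt_ne_zero.2 hz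
  have htop : analyticOrderAt F z ≠ ⊤ := fun h => hc <| by
    have := han.eq_of_eventuallyEq (g := fun _ => 0) (fun _ _ => analyticAt_const)
      (analyticOrderAt_eq_top.1 h)
    exact congrFun this c
  lift analyticOrderAt F z to ℕ using htop with n
  have : n ≠ 0 := by simpa using h0
  simp only [ENat.map_natCast, WithTop.untop₀_coe]
  exact_mod_cast Nat.one_le_iff_ne_zero.2 this

lemma integral_abs_sin_two_pi : ∫ θ in (0 : ℝ)..2 * Real.pi, |Real.sin θ| = 4 := by
  have hi : ∀ a b : ℝ, IntervalIntegrable (fun θ => |Real.sin θ|) volume a b := fun a b =>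
    Continuous.intervalIntegrable (by fun_prop) a b
  have hpi := Real.pi_pos
  rw [← intervalIntegral.integral_add_adjacent_intervals (hi 0 Real.pi) (hi _ _)]
  have h1 : ∫ θ in (0 : ℝ)..Real.pi, |Real.sin θ| = ∫ θ in (0 : ℝ)..Real.pi, Real.sin θ := by
    refine intervalIntegral.integral_congr fun θ hθ => ?_
    rw [uIcc_of_le hpi.le] at hθ
    exact abs_of_nonneg (Real.sin_nonneg_of_mem_Icc hθ)
  have h2 : ∫ θ in Real.pi..2 * Real.pi, |Real.sin θ|
      = ∫ θ in Real.pi..2 * Real.pi, -Real.sin θ := by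
    refine intervalIntegral.integral_congr fun θ hθ => ?_
    rw [uIcc_of_le (by linarith)] at hθ
    refine abs_of_nonpos ?_
    have := Real.sin_nonneg_of_mem_Icc (x := θ - Real.pi)
      ⟨by linarith [hθ.1], by linarith [hθ.2]⟩
    rw [Real.sin_sub_pi] at this
    linarith
  rw [h1, h2, intervalIntegral.integral_neg, integral_sin, integral_sin]
  simp
  norm_num

/-- Jensen's inequality for functions of exponential type in the imaginary direction. -/
lemma sum_log_div_le_of_exp_type {F : ℂ → ℂ} (hF : Differentiable ℂ F) {c : ℝ} {R B a : ℝ}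
    (hR : 0 < R) (hB : 1 ≤ B) (ha : 0 ≤ a) (hc : 1 ≤ ‖F c‖)
    (hbound : ∀ z ∈ sphere (c : ℂ) R, ‖F z‖ ≤ B * Real.exp (a * |z.im|))
    (Z : Finset ℝ) (hZ : ∀ x ∈ Z, |x - c| ≤ R) (hzero : ∀ x ∈ Z, F x = 0) :
    ∑ x ∈ Z, Real.log (R / |x - c|) ≤ Real.log B + 2 * a * R / Real.pi := by
  have hR' : |R| = R := abs_of_pos hR
  have hc0 : F c ≠ 0 := norm_pos_iff.1 (one_pos.trans_le hc)
  have han : AnalyticOnNhd ℂ F (closedBall c |R|) := fun w _ => hF.analyticAt w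
  have hJ := han.circleAverage_log_norm hR.ne' hc0
  have hpi := Real.pi_pos
  have hupper : Real.circleAverage (Real.log ‖F ·‖) c R ≤ Real.log B + 2 * a * R / Real.pi := by
    refine (Real.circleAverage_mono (f₂ := fun z => Real.log B + a * |z.im|) ?_ ?_ ?_).trans_eq ?_
    · exact MeromorphicOn.circleIntegrable_log_norm fun w _ => (hF.analyticAt w).meromorphicAt
    · refine ContinuousOn.circleIntegrable' (Continuous.continuousOn ?_)
      have := Complex.continuous_im
      fun_prop
    · intro z hz
      rw [hR'] at hz
      have hpos : 0 ≤ Real.log B + a * |z.im| := by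
        have := Real.log_nonneg hB
        positivity
      rcases eq_or_ne (F z) 0 with h | h
      · simpa [h] using hpos
      · rw [Real.log_le_iff_le_exp (norm_pos_iff.2 h), Real.exp_add, Real.exp_log (by linarith)]
        exact hbound z hz
    · have him : ∀ θ : ℝ, a * |(circleMap (c : ℂ) R θ).im| = a * R * |Real.sin θ| := by
        intro θ
        have : (circleMap (c : ℂ) R θ).im = R * Real.sin θ := by
          rw [circleMap, Complex.add_im, Complex.ofReal_im, zero_add]
          simp
        rw [this, abs_mul, hR', mul_assoc]
      rw [Real.circleAverage_def]
      simp only [him]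
      rw [intervalIntegral.integral_add (by simp)
        (Continuous.intervalIntegrable (by fun_prop) _ _), intervalIntegral.integral_const,
        intervalIntegral.integral_const_mul, integral_abs_sin_two_pi]
      simp only [smul_eq_mul]
      field_simp
      ring
  have hnn := MeromorphicOn.AnalyticOnNhd.divisor_nonneg han
  have hterm : ∀ u, 0 ≤ (MeromorphicOn.divisor F (closedBall (c : ℂ) |R|) u : ℝ)
      * Real.log (R * ‖(c : ℂ) - u‖⁻¹) := by
    intro u
    by_cases hu : u ∈ closedBall (c : ℂ) |R|
    · have h1 : (0 : ℝ) ≤ (MeromorphicOn.divisor F (closedBall (c : ℂ) |R|) u : ℝ) := by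
        exact_mod_cast hnn u
      refine mul_nonneg h1 ?_
      rcases eq_or_ne ((c : ℂ) - u) 0 with h | h
      · simp [h]
      · refine Real.log_nonneg ?_
        rw [← div_eq_mul_inv, one_le_div (norm_pos_iff.2 h), ← dist_eq_norm, dist_comm, ← hR']
        exact hu
    · rw [Function.locallyFinsuppWithin.apply_eq_zero_of_notMem _ hu]
      simp
  have hfin : (Function.support fun u => (MeromorphicOn.divisor F (closedBall (c : ℂ) |R|) u : ℝ)
      * Real.log (R * ‖(c : ℂ) - u‖⁻¹)).Finite := by
    refine ((MeromorphicOn.divisor F (closedBall (c : ℂ) |R|)).finiteSupport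
      (isCompact_closedBall _ _)).subset fun u hu => ?_
    contrapose! hu
    have : MeromorphicOn.divisor F (closedBall (c : ℂ) |R|) u = 0 := by simpa using hu
    simp [this]
  classical
  let S : Finset ℂ := Z.map ⟨fun x : ℝ => (x : ℂ), Complex.ofReal_injective⟩
  have hlower : ∑ x ∈ Z, Real.log (R / |x - c|) ≤ ∑ᶠ u,
      (MeromorphicOn.divisor F (closedBall (c : ℂ) |R|) u : ℝ)
        * Real.log (R * ‖(c : ℂ) - u‖⁻¹) := by
    rw [finsum_eq_sum_of_support_subset _ (s := hfin.toFinset ∪ S)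
      (by rw [Finset.coe_union, hfin.coe_toFinset]; exact subset_union_left)]
    refine le_trans ?_ (Finset.sum_le_sum_of_subset_of_nonneg Finset.subset_union_right
      fun u _ _ => hterm u)
    rw [Finset.sum_map]
    refine Finset.sum_le_sum fun x hx => ?_
    simp only [Function.Embedding.coeFn_mk]
    have hnorm : ‖(c : ℂ) - x‖ = |x - c| := by
      rw [← Complex.ofReal_sub, Complex.norm_real, Real.norm_eq_abs, abs_sub_comm]
    have hmem : (x : ℂ) ∈ closedBall (c : ℂ) |R| := by
      rw [mem_closedBall, dist_comm, dist_eq_norm, hnorm, hR']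
      exact hZ x hx
    have hx0 : 0 < |x - c| := by
      refine abs_pos.2 (sub_ne_zero.2 fun h => hc0 ?_)
      rw [← h, hzero x hx]
    rw [hnorm, ← div_eq_mul_inv]
    refine le_mul_of_one_le_left (Real.log_nonneg ((one_le_div hx0).2 (hZ x hx))) ?_
    exact_mod_cast one_le_divisor_of_eq_zero hF hc0 (hzero x hx) hmem
  have := Real.log_nonneg hc
  linarith

lemma integral_indicator_inv_le_log {ρ r R : ℝ} (hρ : 0 < ρ) (hρR : ρ ≤ R) (hrR : r ≤ R) : ∫ t in r..R, (Ici ρ).indicator (fun t => t⁻¹) t ≤ Real.log (R / ρ) := by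
  have hint : IntervalIntegrable (fun t : ℝ => t⁻¹) volume ρ R :=
    intervalIntegral.intervalIntegrable_inv (fun x hx => by
      rw [uIcc_of_le hρR] at hx; exact (hρ.trans_le hx.1).ne') continuousOn_id
  rw [← integral_inv_of_pos hρ (hρ.trans_le hρR), intervalIntegral.integral_of_le hrR,
    intervalIntegral.integral_of_le hρR, ← integral_Icc_eq_integral_Ioc (x := ρ),
    setIntegral_indicator measurableSet_Ici]
  refine setIntegral_mono_set ?_ ?_ ?_
  · rw [integrableOn_Icc_iff_integrableOn_Ioc, ← intervalIntegrable_iff_integrableOn_Ioc_of_le hρR]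
    exact hint
  · filter_upwards [ae_restrict_mem measurableSet_Icc] with t ht
    exact inv_nonneg.2 (hρ.le.trans ht.1)
  · exact Eventually.of_forall fun t ht => ⟨ht.2, ht.1.2⟩

/-- A counting lower bound integrates to a lower bound for the Jensen sum. -/
lemma le_sum_log_div {Z : Finset ℝ} {c r R D : ℝ} (hr : 0 < r) (hrR : r ≤ R)
    (hZ : ∀ x ∈ Z, 0 < |x - c| ∧ |x - c| ≤ R)
    (hcount : ∀ t, r ≤ t → t ≤ R → D * t ≤ (Z.filter fun x => |x - c| ≤ t).card) :
    D * (R - r) ≤ ∑ x ∈ Z, Real.log (R / |x - c|) := by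
  have hI : ∀ ρ : ℝ, IntervalIntegrable ((Ici ρ).indicator fun t : ℝ => t⁻¹) volume r R := by
    intro ρ
    rw [intervalIntegrable_iff_integrableOn_Ioc_of_le hrR]
    refine Integrable.indicator ?_ measurableSet_Ici
    have := intervalIntegral.intervalIntegrable_inv (μ := volume) (f := fun t : ℝ => t)
      (a := r) (b := R) (fun x hx => by
        rw [uIcc_of_le hrR] at hx; exact (hr.trans_le hx.1).ne') continuousOn_id
    rwa [intervalIntegrable_iff_integrableOn_Ioc_of_le hrR] at this
  refine le_trans ?_ (Finset.sum_le_sum fun x hx =>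
    integral_indicator_inv_le_log (hZ x hx).1 (hZ x hx).2 hrR)
  rw [← intervalIntegral.integral_finsetSum fun x _ => hI _]
  have hconst : D * (R - r) = ∫ _ in r..R, D := by
    rw [intervalIntegral.integral_const, smul_eq_mul, mul_comm]
  rw [hconst]
  refine intervalIntegral.integral_mono_on hrR (by simp)
    (by simpa only [← Finset.sum_fn] using
      IntervalIntegrable.sum Z fun x _ => hI |x - c|) fun t ht => ?_
  have ht0 : 0 < t := hr.trans_le ht.1
  have : ∑ x ∈ Z, (Ici |x - c|).indicator (fun t : ℝ => t⁻¹) t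
      = (Z.filter fun x => |x - c| ≤ t).card * t⁻¹ := by
    simp only [indicator_apply, mem_Ici]
    rw [← Finset.sum_filter, Finset.sum_const, nsmul_eq_mul]
  rw [this, ← div_eq_mul_inv, le_div_iff₀ ht0]
  exact hcount t ht.1 ht.2

lemma ncard_inter_closedBall_le {H : Set ℝ} {δ : ℝ} (hδ : 0 < δ)
    (hH : ∀ x ∈ H, ∀ y ∈ H, x ≠ y → δ ≤ dist x y) (R x : ℝ) :
    (H ∩ closedBall x R).Finite ∧
      (H ∩ closedBall x R).ncard ≤ (Finset.Icc ⌊-R / δ⌋ ⌊R / δ⌋).card := by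
  have hmaps : ∀ t ∈ H ∩ closedBall x R,
      ⌊(t - x) / δ⌋ ∈ (Finset.Icc ⌊-R / δ⌋ ⌊R / δ⌋ : Set ℤ) := by
    rintro t ⟨-, ht⟩
    rw [mem_closedBall, Real.dist_eq, abs_le] at ht
    rw [Finset.coe_Icc]
    exact ⟨Int.floor_mono (by gcongr; exact ht.1), Int.floor_mono (by gcongr; exact ht.2)⟩
  have hinj : InjOn (fun t : ℝ => ⌊(t - x) / δ⌋) (H ∩ closedBall x R) := by
    intro s hs t ht hst
    by_contra hne
    have h1 := hH s hs.1 t ht.1 hne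
    have h2 := Int.abs_sub_lt_one_of_floor_eq_floor hst
    rw [← sub_div, sub_sub_sub_cancel_right, abs_div, abs_of_pos hδ, div_lt_one hδ] at h2
    rw [Real.dist_eq] at h1
    linarith
  refine ⟨Set.Finite.of_injOn hmaps hinj (Finset.finite_toSet _), ?_⟩
  have := Set.ncard_le_ncard_of_injOn _ hmaps hinj (Finset.finite_toSet _)
  rwa [Set.ncard_coe_finset] at this

lemma exists_card_inter_closedBall_le {H : Set ℝ} {δ : ℝ} (hδ : 0 < δ)
    (hH : ∀ x ∈ H, ∀ y ∈ H, x ≠ y → δ ≤ dist x y) (R : ℝ) :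
    ∃ N : ℕ, ∀ x, (H ∩ closedBall x R).Finite ∧ (H ∩ closedBall x R).ncard ≤ N :=
  ⟨_, ncard_inter_closedBall_le hδ hH R⟩

lemma UniformlyDiscrete.finite_inter_closedBall {H : Set ℝ} (hH : UniformlyDiscrete H)
    (x R : ℝ) : (H ∩ closedBall x R).Finite := by
  obtain ⟨δ, hδ, h⟩ := hH
  exact ((exists_card_inter_closedBall_le hδ h R).choose_spec x).1

lemma exists_le_ncard_of_lt_lowerUniformDensity {H : Set ℝ} {D : ℝ}
    (h : D < lowerUniformDensity H) :
    ∃ r₀ > 0, ∀ r ≥ r₀, ∀ x, D * (2 * r) ≤ (H ∩ closedBall x r).ncard := by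
  have hnn : ∀ r x : ℝ, 0 ≤ (Nat.card ↥(H ∩ closedBall x r) : ℝ) /
      (volume (closedBall x r)).toReal := fun r x => by positivity
  have hev := eventually_lt_of_lt_liminf h
    (isBoundedUnder_of ⟨0, fun r => Real.iInf_nonneg (hnn r)⟩)
  obtain ⟨r₀, hr₀⟩ := eventually_atTop.1 hev
  refine ⟨max r₀ 1, by positivity, fun r hr x => ?_⟩
  have hr0 : 0 < r := lt_of_lt_of_le (by positivity) hr
  have h1 := (hr₀ r ((le_max_left _ _).trans hr)).le.trans
    (ciInf_le ⟨0, by rintro _ ⟨y, rfl⟩; exact hnn r y⟩ x)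
  rw [Real.volume_closedBall, ENNReal.toReal_ofReal (by positivity),
    le_div_iff₀ (by positivity)] at h1
  exact h1

/-- The Lagrange interpolation function of `f` on the nodes `Z`. -/
def lagrangeInterp (Z : Finset ℝ) (f : ℝ → ℂ) (z : ℂ) : ℂ :=
  ∑ x ∈ Z, f x * ∏ y ∈ Z.erase x, (z - y) / ((x : ℂ) - y)

lemma lagrangeInterp_apply {Z : Finset ℝ} (f : ℝ → ℂ) {x : ℝ} (hx : x ∈ Z) :
    lagrangeInterp Z f x = f x := by
  rw [lagrangeInterp, Finset.sum_eq_single_of_mem x hx]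
  · rw [Finset.prod_eq_one, mul_one]
    intro y hy
    refine div_self (sub_ne_zero.2 fun h => ?_)
    exact Finset.ne_of_mem_erase hy (Complex.ofReal_injective h).symm
  · intro y hy hyx
    rw [Finset.prod_eq_zero (Finset.mem_erase.2 ⟨hyx.symm, hx⟩) (by simp), mul_zero]

lemma differentiable_lagrangeInterp (Z : Finset ℝ) (f : ℝ → ℂ) :
    Differentiable ℂ (lagrangeInterp Z f) := by
  unfold lagrangeInterp
  refine Differentiable.fun_sum fun x _ => Differentiable.const_mul ?_ _
  refine Differentiable.fun_finsetProd fun y _ => ?_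
  fun_prop

lemma norm_lagrangeInterp_le {Z : Finset ℝ} {f : ℝ → ℂ} {δ R M c : ℝ} {N : ℕ} (hδ : 0 < δ)
    (hR : 0 ≤ R) (hN : Z.card ≤ N) (hM : 0 ≤ M)
    (hsep : ∀ x ∈ Z, ∀ y ∈ Z, x ≠ y → δ ≤ |x - y|) (hZ : ∀ x ∈ Z, |x - c| ≤ R)
    (hf : ∀ x ∈ Z, ‖f x‖ ≤ M) {z : ℂ} (hz : ‖z - c‖ ≤ R) :
    ‖lagrangeInterp Z f z‖ ≤ N * (2 * R / δ + 1) ^ N * M := by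
  have hb : 1 ≤ 2 * R / δ + 1 := by linarith [show 0 ≤ 2 * R / δ by positivity]
  have hterm : ∀ x ∈ Z, ‖f x * ∏ y ∈ Z.erase x, (z - y) / ((x : ℂ) - y)‖
      ≤ M * (2 * R / δ + 1) ^ N := by
    intro x hx
    rw [norm_mul, norm_prod]
    refine mul_le_mul (hf x hx) ?_ (by positivity) hM
    refine le_trans (Finset.prod_le_prod (g := fun _ => 2 * R / δ + 1)
      (fun _ _ => norm_nonneg _) fun y hy => ?_) ?_
    · have hy' := Finset.mem_of_mem_erase hy
      have h1 : ‖z - y‖ ≤ 2 * R := by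
        have : z - y = (z - c) - ((y - c : ℝ) : ℂ) := by push_cast; ring
        rw [this]
        refine (norm_sub_le _ _).trans ?_
        rw [Complex.norm_real, Real.norm_eq_abs]
        linarith [hZ y hy']
      have h2 : δ ≤ ‖(x : ℂ) - y‖ := by
        rw [← Complex.ofReal_sub, Complex.norm_real, Real.norm_eq_abs]
        exact hsep x hx y hy' (Finset.ne_of_mem_erase hy).symm
      rw [norm_div]
      have : ‖z - y‖ / ‖(x : ℂ) - y‖ ≤ 2 * R / δ := by gcongr
      linarith
    · rw [Finset.prod_const]
      exact pow_le_pow_right₀ hb ((Finset.card_le_card (Finset.erase_subset _ _)).trans hN)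
  refine (norm_sum_le_of_le Z hterm).trans ?_
  rw [Finset.sum_const, nsmul_eq_mul]
  have : (Z.card : ℝ) ≤ N := by exact_mod_cast hN
  calc (Z.card : ℝ) * (M * (2 * R / δ + 1) ^ N) ≤ N * (M * (2 * R / δ + 1) ^ N) := by gcongr
    _ = _ := by ring

/-- Beurling's sampling theorem, sufficiency: a uniformly discrete set of lower uniform density
greater than the length of the spectrum is a sampling set. -/
lemma exists_sampling_const_of_lt_lowerUniformDensity {H : Set ℝ} (hH : UniformlyDiscrete H)
    {σ : ℝ} (hσ : 0 ≤ σ) (hd : 2 * σ < lowerUniformDensity H) :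
    ∃ C > 0, ∀ g : ℝ → ℂ, MemBernstein (Icc (-σ) σ) g → ∀ M ≥ 0, (∀ x ∈ H, ‖g x‖ ≤ M) →
      ∀ x, ‖g x‖ ≤ C * M := by
  obtain ⟨D, hD1, hD2⟩ := exists_between hd
  obtain ⟨τ, hτ1, hτ2⟩ : ∃ τ, σ < τ ∧ 2 * τ < D := ⟨(σ + D / 2) / 2, by linarith, by linarith⟩
  have hτ0 : 0 ≤ τ := hσ.trans hτ1.le
  obtain ⟨r₀, hr₀, hcount⟩ := exists_le_ncard_of_lt_lowerUniformDensity hD2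
  obtain ⟨A, hA, hext⟩ := exists_entire_extension hσ hτ1
  obtain ⟨δ, hδ, hsep⟩ := id hH
  set B : ℝ := 4 * (A + 1) with hB
  obtain ⟨R, hRr, hR⟩ : ∃ R ≥ r₀, Real.log B + 2 * D * r₀ < (2 * D - 4 * τ) * R := by
    refine ⟨max r₀ ((Real.log B + 2 * D * r₀ + 1) / (2 * D - 4 * τ)), le_max_left _ _, ?_⟩
    have hpos : 0 < 2 * D - 4 * τ := by linarith
    have := (div_le_iff₀' hpos).1
      (le_max_right r₀ ((Real.log B + 2 * D * r₀ + 1) / (2 * D - 4 * τ)))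
    linarith
  have hR0 : 0 < R := hr₀.trans_le hRr
  obtain ⟨N, hN⟩ := exists_card_inter_closedBall_le hδ hsep R
  set L : ℝ := N * (2 * R / δ + 1) ^ N with hL
  have hL0 : 0 ≤ L := by positivity
  refine ⟨4 * (L + 1), by positivity, fun g hg M hM hgM => ?_⟩
  by_contra! hcon
  obtain ⟨x₁, hx₁⟩ := hcon
  have hbdd : BddAbove (range fun x => ‖g x‖) := by
    obtain ⟨K, hK⟩ := hg.2.1
    exact ⟨K, by rintro _ ⟨x, rfl⟩; exact hK x⟩
  set G := ⨆ x, ‖g x‖ with hG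
  have hle : ∀ x, ‖g x‖ ≤ G := fun x => le_ciSup hbdd x
  have hGM : 4 * (L + 1) * M < G := hx₁.trans_le (hle x₁)
  have hG0 : 0 < G := lt_of_le_of_lt (by positivity) hGM
  obtain ⟨x₀, hx₀⟩ : ∃ x₀, G / 2 < ‖g x₀‖ := exists_lt_of_lt_ciSup (by linarith)
  obtain ⟨F, hF, hFg, hFb, -⟩ := hext g hg G hG0.le hle
  have hfin := (hN x₀).1
  set Z : Finset ℝ := hfin.toFinset with hZ
  have hmem : ∀ x, x ∈ Z ↔ x ∈ H ∧ |x - x₀| ≤ R := fun x => by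
    rw [hZ, Set.Finite.mem_toFinset, mem_inter_iff, mem_closedBall, Real.dist_eq]
  have hZcard : Z.card ≤ N := by
    rw [← Set.ncard_eq_toFinset_card _ hfin]; exact (hN x₀).2
  have hLag : ∀ z : ℂ, ‖z - x₀‖ ≤ R → ‖lagrangeInterp Z g z‖ ≤ L * M := fun z hz =>
    norm_lagrangeInterp_le hδ hR0.le hZcard hM
      (fun x hx y hy hxy => by
        rw [← Real.dist_eq]; exact hsep x ((hmem x).1 hx).1 y ((hmem y).1 hy).1 hxy)
      (fun x hx => ((hmem x).1 hx).2) (fun x hx => hgM x ((hmem x).1 hx).1) hz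
  have hLM : 4 * (L * M) ≤ G := by nlinarith
  have hc4 : ‖(4 / G : ℂ)‖ = 4 / G := by
    rw [norm_div, Complex.norm_real, Real.norm_eq_abs, abs_of_pos hG0]; simp
  let E : ℂ → ℂ := fun z => (4 / G : ℂ) * (F z - lagrangeInterp Z g z)
  have hE : Differentiable ℂ E := (hF.sub (differentiable_lagrangeInterp Z g)).const_mul _
  have hE0 : 1 ≤ ‖E x₀‖ := by
    simp only [E, norm_mul, hc4]
    rw [div_mul_eq_mul_div, one_le_div hG0]
    have h1 := norm_sub_norm_le (F x₀) (lagrangeInterp Z g x₀)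
    have h2 := hLag x₀ (by simpa using hR0.le)
    rw [hFg] at h1 ⊢
    linarith
  have hEb : ∀ z ∈ sphere (x₀ : ℂ) R,
      ‖E z‖ ≤ B * Real.exp (2 * Real.pi * τ * |z.im|) := by
    intro z hz
    have h1 := hLag z (mem_sphere_iff_norm.1 hz).le
    have h2 := hFb z
    have h3 : 1 ≤ Real.exp (2 * Real.pi * τ * |z.im|) := Real.one_le_exp (by positivity)
    simp only [E, norm_mul, hc4]
    rw [div_mul_eq_mul_div, div_le_iff₀ hG0]
    have h4 := norm_sub_le (F z) (lagrangeInterp Z g z)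
    rw [hB]
    nlinarith
  have hEz : ∀ x ∈ Z, E x = 0 := fun x hx => by
    simp only [E, hFg, lagrangeInterp_apply g hx, sub_self, mul_zero]

  have hJ := sum_log_div_le_of_exp_type hE hR0 (B := B) (a := 2 * Real.pi * τ) (by linarith)
    (by positivity) hE0 hEb Z (fun x hx => ((hmem x).1 hx).2) hEz
  have hlow := le_sum_log_div (Z := Z) (c := x₀) (D := 2 * D) hr₀ hRr
    (fun x hx => ⟨abs_pos.2 (sub_ne_zero.2 fun h => by
      have := hEz x hx
      rw [h] at this
      rw [this, norm_zero] at hE0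
      linarith), ((hmem x).1 hx).2⟩)
    (fun t ht htR => by
      have h1 := hcount t ht x₀
      have h2 : (Z.filter fun x => |x - x₀| ≤ t : Set ℝ) = H ∩ closedBall x₀ t := by
        ext x
        simp only [Finset.coe_filter, hmem, mem_ofPred_eq, mem_inter_iff, mem_closedBall,
          Real.dist_eq]
        exact ⟨fun h => ⟨h.1.1, h.2⟩, fun h => ⟨⟨h.1, h.2.trans htR⟩, h.2⟩⟩
      rw [← h2, Set.ncard_coe_finset] at h1
      linarith)
  have hpi := Real.pi_pos
  have : 2 * (2 * Real.pi * τ) * R / Real.pi = 4 * τ * R := by field_simp; ring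
  rw [this] at hJ
  nlinarith

lemma MemBernstein.exists_lipschitz {σ : ℝ} (hσ : 0 ≤ σ) :
    ∃ A > 0, ∀ f : ℝ → ℂ, MemBernstein (Icc (-σ) σ) f → ∀ G ≥ 0, (∀ x, ‖f x‖ ≤ G) →
      ∀ x y, ‖f x - f y‖ ≤ A * G * |x - y| := by
  obtain ⟨A, hA, h⟩ := exists_entire_extension hσ (lt_add_one σ)
  refine ⟨A, hA, fun f hf G hG0 hG x y => ?_⟩
  obtain ⟨F, hF, hFf, -, hF'⟩ := h f hf G hG0 hG
  have hconv : Convex ℝ {z : ℂ | z.im = 0} := by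
    intro a ha b hb s t _ _ _
    simp only [mem_ofPred_eq] at ha hb ⊢
    simp [ha, hb]
  have := hconv.norm_image_sub_le_of_norm_deriv_le (𝕜 := ℂ) (f := F) (C := A * G)
    (fun z _ => hF z) (fun z hz => by
      refine (hF' z).trans_eq ?_
      rw [show z.im = 0 from hz]
      simp)
    (x := y) (y := x) (Complex.ofReal_im y) (Complex.ofReal_im x)
  rwa [hFf, hFf, ← Complex.ofReal_sub, Complex.norm_real, Real.norm_eq_abs] at this

/-- Trigonometric sums with frequencies in `[-σ, σ]`. -/
def trigSpan (σ : ℝ) : Submodule ℂ (ℝ → ℂ) :=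
  Submodule.span ℂ {f | ∃ s : ℝ, |s| ≤ σ ∧
    f = fun x : ℝ => Complex.exp (↑(2 * Real.pi * (s * x)) * Complex.I)}

lemma exp_mem_trigSpan {s σ : ℝ} (hs : |s| ≤ σ) :
    (fun x : ℝ => Complex.exp (↑(2 * Real.pi * (s * x)) * Complex.I)) ∈ trigSpan σ :=
  Submodule.subset_span ⟨s, hs, rfl⟩

lemma trigSpan_mono {σ τ : ℝ} (h : σ ≤ τ) : trigSpan σ ≤ trigSpan τ :=
  Submodule.span_mono fun _ ⟨s, hs, hf⟩ => ⟨s, hs.trans h, hf⟩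

lemma mul_mem_trigSpan {σ τ : ℝ} {f g : ℝ → ℂ} (hf : f ∈ trigSpan σ) (hg : g ∈ trigSpan τ) :
    f * g ∈ trigSpan (σ + τ) := by
  have := Submodule.mul_mem_mul hf hg
  rw [trigSpan, trigSpan, Submodule.span_mul_span] at this
  refine Submodule.span_mono ?_ this
  rintro _ ⟨_, ⟨s, hs, rfl⟩, _, ⟨t, ht, rfl⟩, rfl⟩
  refine ⟨s + t, (abs_add_le s t).trans (add_le_add hs ht), ?_⟩
  ext x
  simp only [Pi.mul_apply]
  rw [← Complex.exp_add]
  congr 1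
  push_cast
  ring

lemma comp_affine_mem_trigSpan {σ : ℝ} {f : ℝ → ℂ} (hf : f ∈ trigSpan σ) (a b : ℝ) :
    (fun x => f (a * x + b)) ∈ trigSpan (|a| * σ) := by
  have hle : trigSpan σ ≤ (trigSpan (|a| * σ)).comap
      (LinearMap.funLeft ℂ ℂ fun x : ℝ => a * x + b) := by
    refine Submodule.span_le.2 ?_
    rintro _ ⟨s, hs, rfl⟩
    refine Submodule.mem_comap.2 ?_
    have h1 : |a * s| ≤ |a| * σ := by rw [abs_mul]; gcongr
    have h2 := (trigSpan (|a| * σ)).smul_mem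
      (Complex.exp (↑(2 * Real.pi * (s * b)) * Complex.I)) (exp_mem_trigSpan h1)
    convert h2 using 1
    ext x
    simp only [LinearMap.funLeft_apply, Pi.smul_apply, smul_eq_mul]
    rw [← Complex.exp_add]
    congr 1
    push_cast
    ring
  exact hle hf

lemma cos_mem_trigSpan (s b : ℝ) :
    (fun x : ℝ => (Real.cos (2 * Real.pi * (s * x) + b) : ℂ)) ∈ trigSpan |s| := by
  have h1 := (trigSpan |s|).smul_mem (Complex.exp (b * Complex.I) / 2)
    (exp_mem_trigSpan (le_refl |s|))
  have h2 := (trigSpan |s|).smul_mem (Complex.exp (-(b * Complex.I)) / 2)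
    (exp_mem_trigSpan (abs_neg s).le)
  convert (trigSpan |s|).add_mem h1 h2 using 1
  ext x
  simp only [Pi.add_apply, Pi.smul_apply, smul_eq_mul]
  rw [Complex.ofReal_cos, Complex.cos, div_mul_eq_mul_div, div_mul_eq_mul_div, ← Complex.exp_add,
    ← Complex.exp_add, ← add_div]
  congr 3 <;> · push_cast; ring

lemma prod_mem_trigSpan {ι : Type*} (S : Finset ι) (f : ι → ℝ → ℂ) (σ : ι → ℝ)
    (hf : ∀ i ∈ S, f i ∈ trigSpan (σ i)) :
    (fun x => ∏ i ∈ S, f i x) ∈ trigSpan (∑ i ∈ S, σ i) := by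
  classical
  induction S using Finset.induction_on with
  | empty =>
    convert exp_mem_trigSpan (s := 0) (σ := ∑ i ∈ ∅, σ i) (by simp) using 1
    ext x; simp
  | insert a S ha ih =>
    rw [Finset.sum_insert ha]
    convert mul_mem_trigSpan (hf a (Finset.mem_insert_self a S))
      (ih fun i hi => hf i (Finset.mem_insert_of_mem hi)) using 1
    ext x
    simp [Finset.prod_insert ha]

/-- Continuous functions that are boundedly pointwise limits of trigonometric sums with
frequencies in `[-σ, σ]`. -/
def IsTrigLimit (σ : ℝ) (f : ℝ → ℂ) : Prop :=
  Continuous f ∧ ∃ (M : ℝ) (F : ℕ → ℝ → ℂ), (∀ n, F n ∈ trigSpan σ) ∧ (∀ n x, ‖F n x‖ ≤ M) ∧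
    ∀ x, Tendsto (fun n => F n x) atTop (𝓝 (f x))

lemma memBernstein_of_mem_trigSpan {Ω : Set V} {σ : ℝ} {c u : V}
    (hΩ : ∀ s : ℝ, |s| ≤ σ → c + s • u ∈ Ω) {f : ℝ → ℂ} (hf : f ∈ trigSpan σ) :
    MemBernstein Ω
      (fun x => Complex.exp (↑(2 * Real.pi * ⟪x, c⟫) * Complex.I) * f ⟪x, u⟫) := by
  refine Submodule.span_induction (p := fun f _ => MemBernstein Ω
    (fun x => Complex.exp (↑(2 * Real.pi * ⟪x, c⟫) * Complex.I) * f ⟪x, u⟫)) ?_ ?_ ?_ ?_ hf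
  · rintro _ ⟨s, hs, rfl⟩
    convert MemBernstein.exp (hΩ s hs) using 2 with x
    rw [← Complex.exp_add, inner_add_right, inner_smul_right]
    congr 1
    push_cast
    ring
  · simpa using (MemBernstein.zero : MemBernstein Ω _)
  · intro f g _ _ hf hg
    convert hf.add hg using 2
    simp only [Pi.add_apply]
    ring
  · intro a f _ hf
    convert hf.const_mul a using 2
    simp only [Pi.smul_apply, smul_eq_mul]
    ring

namespace IsTrigLimit

variable {σ τ : ℝ} {f g : ℝ → ℂ}

lemma of_mem_trigSpan (hf : f ∈ trigSpan σ) (hfc : Continuous f) {M : ℝ}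
    (hM : ∀ x, ‖f x‖ ≤ M) : IsTrigLimit σ f :=
  ⟨hfc, M, fun _ => f, fun _ => hf, fun _ => hM, fun _ => tendsto_const_nhds⟩

lemma memBernstein (hf : IsTrigLimit σ f) {Ω : Set V} {c u : V}
    (hΩ : ∀ s : ℝ, |s| ≤ σ → c + s • u ∈ Ω) :
    MemBernstein Ω
      (fun x => Complex.exp (↑(2 * Real.pi * ⟪x, c⟫) * Complex.I) * f ⟪x, u⟫) := by
  obtain ⟨hc, M, F, hF, hM, hlim⟩ := hf
  refine MemBernstein.of_tendsto (fun n => memBernstein_of_mem_trigSpan hΩ (hF n)) (M := M)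
    (fun n x => ?_) (by fun_prop) (fun x => (hlim _).const_mul _)
  rw [norm_mul, Complex.norm_exp_ofReal_mul_I, one_mul]
  exact hM n _

lemma memBernstein_Icc (hf : IsTrigLimit σ f) : MemBernstein (Icc (-σ) σ) f := by
  have := hf.memBernstein (Ω := Icc (-σ) σ) (c := 0) (u := (1 : ℝ))
    (fun s hs => by simpa using abs_le.1 hs)
  simpa using this

lemma mono (hf : IsTrigLimit σ f) (h : σ ≤ τ) : IsTrigLimit τ f := by
  obtain ⟨hc, M, F, hF, hM, hlim⟩ := hf
  exact ⟨hc, M, F, fun n => trigSpan_mono h (hF n), hM, hlim⟩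

lemma mul (hf : IsTrigLimit σ f) (hg : IsTrigLimit τ g) :
    IsTrigLimit (σ + τ) (fun x => f x * g x) := by
  obtain ⟨hc, M, F, hF, hM, hlim⟩ := hf
  obtain ⟨hc', M', F', hF', hM', hlim'⟩ := hg
  refine ⟨hc.mul hc', M * M', fun n => F n * F' n, fun n => mul_mem_trigSpan (hF n) (hF' n),
    fun n x => ?_, fun x => (hlim x).mul (hlim' x)⟩
  refine (norm_mul _ _).le.trans ?_
  exact mul_le_mul (hM n x) (hM' n x) (norm_nonneg _) ((norm_nonneg _).trans (hM n x))

lemma zero : IsTrigLimit σ (fun _ => 0) :=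
  of_mem_trigSpan (Submodule.zero_mem _) continuous_const (M := 0) (by simp)

lemma add (hf : IsTrigLimit σ f) (hg : IsTrigLimit σ g) :
    IsTrigLimit σ (fun x => f x + g x) := by
  obtain ⟨hc, M, F, hF, hM, hlim⟩ := hf
  obtain ⟨hc', M', F', hF', hM', hlim'⟩ := hg
  exact ⟨hc.add hc', M + M', fun n => F n + F' n, fun n => Submodule.add_mem _ (hF n) (hF' n),
    fun n x => norm_add_le_of_le (hM n x) (hM' n x), fun x => (hlim x).add (hlim' x)⟩

lemma sum {ι : Type*} (S : Finset ι) {f : ι → ℝ → ℂ} (hf : ∀ i ∈ S, IsTrigLimit σ (f i)) :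
    IsTrigLimit σ (fun x => ∑ i ∈ S, f i x) := by
  classical
  induction S using Finset.induction_on with
  | empty => simpa using zero
  | insert a S ha ih =>
    simp only [Finset.sum_insert ha]
    exact (hf a (Finset.mem_insert_self a S)).add
      (ih fun i hi => hf i (Finset.mem_insert_of_mem hi))

lemma comp_affine (hf : IsTrigLimit σ f) (a b : ℝ) :
    IsTrigLimit (|a| * σ) (fun x => f (a * x + b)) := by
  obtain ⟨hc, M, F, hF, hM, hlim⟩ := hf
  exact ⟨by fun_prop, M, fun n x => F n (a * x + b), fun n => comp_affine_mem_trigSpan (hF n) a b,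
    fun n x => hM n _, fun x => hlim _⟩

end IsTrigLimit

lemma prod_cos_mul_sinc (x : ℝ) (n : ℕ) :
    (∏ k ∈ Finset.range n, Real.cos (x / 2 ^ (k + 1))) * Real.sinc (x / 2 ^ n) = Real.sinc x := by
  induction n with
  | zero => simp
  | succ n ih =>
    rw [Finset.prod_range_succ, ← ih, mul_assoc]
    congr 1
    set y := x / 2 ^ (n + 1) with hy
    have hxy : x / 2 ^ n = 2 * y := by rw [hy, pow_succ]; field_simp
    rw [hxy]
    rcases eq_or_ne y 0 with h | h
    · simp [h]
    · rw [Real.sinc_of_ne_zero h, Real.sinc_of_ne_zero (by simpa using h), Real.sin_two_mul]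
      field_simp

lemma isTrigLimit_sinc : IsTrigLimit (1 / 2) (fun x => (Real.sinc (Real.pi * x) : ℂ)) := by
  refine ⟨by have := Real.continuous_sinc; fun_prop, 1, fun n x => ∏ k ∈ Finset.range n,
    (Real.cos (2 * Real.pi * ((1 / 2) ^ (k + 2) * x) + 0) : ℂ), fun n => ?_, fun n x => ?_,
    fun x => ?_⟩
  · refine trigSpan_mono ?_ (prod_mem_trigSpan _ _ _ fun k _ => cos_mem_trigSpan _ 0)
    have : ∀ k : ℕ, |((1 / 2 : ℝ) ^ (k + 2))| = (1 / 4) * (1 / 2) ^ k := fun k => by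
      rw [abs_of_pos (by positivity)]; ring
    simp only [this]
    rw [← Finset.mul_sum]
    have := sum_geometric_two_le n
    linarith
  · rw [norm_prod]
    refine Finset.prod_le_one (fun _ _ => norm_nonneg _) fun k _ => ?_
    rw [Complex.norm_real]
    exact Real.abs_cos_le_one _
  · have h1 : Tendsto (fun n : ℕ => Real.sinc (Real.pi * x / 2 ^ n)) atTop (𝓝 1) := by
      have h0 : Tendsto (fun n : ℕ => Real.pi * x / 2 ^ n) atTop (𝓝 0) := by
        have := (tendsto_pow_atTop_nhds_zero_of_lt_one (r := (1 / 2 : ℝ)) (by norm_num)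
          (by norm_num)).const_mul (Real.pi * x)
        simpa [div_eq_mul_inv] using this
      have := (Real.continuous_sinc.tendsto 0).comp h0
      rwa [Real.sinc_zero] at this
    have h2 : Tendsto (fun n : ℕ => Real.sinc (Real.pi * x) / Real.sinc (Real.pi * x / 2 ^ n))
        atTop (𝓝 (Real.sinc (Real.pi * x))) := by
      have := (tendsto_const_nhds (x := Real.sinc (Real.pi * x))).div h1 one_ne_zero
      rw [div_one] at this
      exact this
    refine ((Complex.continuous_ofReal.tendsto _).comp h2).congr' ?_
    filter_upwards [h1.eventually_ne one_ne_zero] with n hn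
    rw [Function.comp_apply, ← prod_cos_mul_sinc (Real.pi * x) n, mul_div_cancel_right₀ _ hn,
      Complex.ofReal_prod]
    refine Finset.prod_congr rfl fun k _ => ?_
    congr 2
    rw [pow_succ (1 / 2 : ℝ) (k + 1), one_div, inv_pow]
    field_simp
    ring

/-- The Fejér kernel `sinc² (π x)`. -/
def fejer (x : ℝ) : ℝ := Real.sinc (Real.pi * x) ^ 2

lemma isTrigLimit_fejer : IsTrigLimit 1 (fun x => (fejer x : ℂ)) := by
  convert isTrigLimit_sinc.mul isTrigLimit_sinc using 1
  · norm_num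
  · ext x; simp [fejer, sq]

lemma fejer_nonneg (x : ℝ) : 0 ≤ fejer x := sq_nonneg _

lemma fejer_zero : fejer 0 = 1 := by simp [fejer]

lemma fejer_neg (x : ℝ) : fejer (-x) = fejer x := by simp [fejer]

lemma fejer_le_one (x : ℝ) : fejer x ≤ 1 := by
  rw [fejer, sq_le_one_iff_abs_le_one]
  exact Real.abs_sinc_le_one _

lemma abs_mul_sinc_le (x : ℝ) : |x * Real.sinc x| ≤ 1 := by
  rcases eq_or_ne x 0 with h | h
  · simp [h]
  · rw [Real.sinc_of_ne_zero h, mul_div_cancel₀ _ h]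
    exact Real.abs_sin_le_one x

lemma sq_mul_fejer_le (x : ℝ) : x ^ 2 * fejer x ≤ 1 := by
  have h := (sq_le_one_iff_abs_le_one _).2 (abs_mul_sinc_le (Real.pi * x))
  have : 1 ≤ Real.pi ^ 2 := by nlinarith [Real.pi_gt_three]
  rw [fejer]
  nlinarith [sq_nonneg (x * Real.sinc (Real.pi * x))]

lemma abs_mul_fejer_le (x : ℝ) : |x| * fejer x ≤ 1 := by
  have h1 := sq_mul_fejer_le x
  have h2 := fejer_le_one x
  have h3 := fejer_nonneg x
  rw [← sq_abs] at h1
  nlinarith [abs_nonneg x, mul_nonneg h3 (sq_nonneg (|x| - 1)), h1, h2]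

lemma one_fourth_le_fejer {x : ℝ} (hx : |x| ≤ 1 / 2) : 1 / 4 ≤ fejer x := by
  wlog h : 0 ≤ x generalizing x
  · rw [← fejer_neg]
    exact this (by rwa [abs_neg]) (by linarith)
  rw [abs_of_nonneg h] at hx
  rcases h.eq_or_lt with rfl | h
  · rw [fejer_zero]; norm_num
  have hpi := Real.pi_pos
  have h1 : 2 / Real.pi * (Real.pi * x) ≤ Real.sin (Real.pi * x) :=
    Real.mul_le_sin (by positivity) (by nlinarith)
  have h2 : 1 / 2 ≤ Real.sinc (Real.pi * x) := by
    rw [Real.sinc_of_ne_zero (by positivity), le_div_iff₀ (by positivity)]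
    have : 2 / Real.pi * (Real.pi * x) = 2 * x := by field_simp
    nlinarith [Real.pi_le_four]
  rw [fejer]
  nlinarith

/-- Trigonometric limits of bandwidth `σ` are controlled, with constant `C`, by their values
on `H`. -/
def IsTrigSampling (σ C : ℝ) (H : Set ℝ) : Prop :=
  ∀ g, IsTrigLimit σ g → ∀ M ≥ 0, (∀ x ∈ H, ‖g x‖ ≤ M) → ∀ x, ‖g x‖ ≤ C * M

lemma le_telescoping_of_le_of_mul_le {e t D : ℝ} (he : 0 ≤ e) (ht : 0 ≤ t) (h1 : e ≤ D * t)
    (h2 : e * t ≤ D) : e ≤ 6 * D * (2 * t / (1 + 2 * t) - t / (1 + t)) := by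
  have h3 : 2 * t / (1 + 2 * t) - t / (1 + t) = t / ((1 + t) * (1 + 2 * t)) := by
    field_simp
    ring
  rw [h3, ← mul_div_assoc, le_div_iff₀ (by positivity)]
  nlinarith [mul_nonneg he (sq_nonneg (t - 1)), mul_le_mul_of_nonneg_right h2 ht]

lemma IsTrigSampling.exists_gt {σ C : ℝ} {H : Set ℝ} (hσ : 0 < σ)
    (h : IsTrigSampling σ C H) :
    ∃ δ > 0, IsTrigSampling (σ + δ) (2 * C) H := by
  obtain ⟨A, hA, hlip⟩ := MemBernstein.exists_lipschitz (σ := 2 * σ) (by positivity)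
  set B := A + 2 / (σ / 2) with hB
  have hB0 : 0 < B := by positivity
  set K := ⌈12 * B * C⌉₊ + 1 with hK
  have hK1 : 12 * B * C ≤ K := by
    rw [hK]; push_cast; linarith [Nat.le_ceil (12 * B * C)]
  have hK0 : (0 : ℝ) < K := by rw [hK]; positivity
  have hδσ : (1 / 2 : ℝ) ^ K * (σ / 2) ≤ σ := by
    have : (1 / 2 : ℝ) ^ K ≤ 1 := pow_le_one₀ (by norm_num) (by norm_num)
    nlinarith
  refine ⟨(1 / 2) ^ K * (σ / 2), by positivity, fun f hf M hM hfM => ?_⟩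
  have hfB : MemBernstein (Icc (-(2 * σ)) (2 * σ)) f :=
    (hf.mono (by linarith)).memBernstein_Icc
  obtain ⟨G₀, hG₀⟩ := hfB.2.1
  have hbdd : BddAbove (range fun x => ‖f x‖) := ⟨G₀, by rintro _ ⟨x, rfl⟩; exact hG₀ x⟩
  set G := ⨆ x, ‖f x‖ with hG
  have hfG : ∀ x, ‖f x‖ ≤ G := fun x => le_ciSup hbdd x
  have hG0 : 0 ≤ G := (norm_nonneg _).trans (hfG 0)
  have key : ∀ x₀, ‖f x₀‖ ≤ C * M + G / 2 := by
    intro x₀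
    set q : ℕ → ℝ := fun k => (1 / 2) ^ (k + 1) with hq
    have hq0 : ∀ k, 0 < q k := fun k => by positivity
    have hq1 : ∀ k, q k ≤ 1 := fun k => pow_le_one₀ (by norm_num) (by norm_num)
    have hg : IsTrigLimit σ (fun x => ∑ k ∈ Finset.range K,
        f ((1 - q k) * x + q k * x₀) *
          (fejer (q k * (σ / 2) * x + -(q k * (σ / 2) * x₀)) : ℂ)) := by
      refine IsTrigLimit.sum _ fun k hk => ?_
      refine ((hf.comp_affine (1 - q k) (q k * x₀)).mul
        (isTrigLimit_fejer.comp_affine (q k * (σ / 2)) (-(q k * (σ / 2) * x₀)))).mono ?_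
      rw [abs_of_nonneg (by linarith [hq1 k]), abs_of_pos (mul_pos (hq0 k) (by positivity))]
      have : (1 / 2 : ℝ) ^ K ≤ q k :=
        pow_le_pow_of_le_one (by norm_num) (by norm_num) (Finset.mem_range.1 hk)
      have h2 : (0 : ℝ) < (1 / 2) ^ K := by positivity
      nlinarith [mul_le_mul_of_nonneg_right this hσ.le, mul_pos (mul_pos h2 hσ) (hq0 k), hq0 k]
    have hgH : ∀ x ∈ H, ‖∑ k ∈ Finset.range K, f ((1 - q k) * x + q k * x₀) *
          (fejer (q k * (σ / 2) * x + -(q k * (σ / 2) * x₀)) : ℂ)‖ ≤ K * M + 6 * (B * G) := by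
      intro x hx
      set y := |x - x₀| with hy
      have hterm : ∀ k, ‖f ((1 - q k) * x + q k * x₀) *
          (fejer (q k * (σ / 2) * x + -(q k * (σ / 2) * x₀)) : ℂ)‖ ≤
          M + 6 * (B * G) * (2 * (q k * y) / (1 + 2 * (q k * y)) - q k * y / (1 + q k * y)) := by
        intro k
        set F := fejer (q k * (σ / 2) * x + -(q k * (σ / 2) * x₀)) with hF
        have hF0 : 0 ≤ F := fejer_nonneg _
        have hF1 : F ≤ 1 := fejer_le_one _
        have ht0 : 0 ≤ q k * y := mul_nonneg (hq0 k).le (abs_nonneg _)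
        have hFt : (σ / 2) * (q k * y) * F ≤ 1 := by
          have := abs_mul_fejer_le (q k * (σ / 2) * x + -(q k * (σ / 2) * x₀))
          rw [show q k * (σ / 2) * x + -(q k * (σ / 2) * x₀) = (q k * (σ / 2)) * (x - x₀) by ring,
            abs_mul, abs_of_pos (mul_pos (hq0 k) (by positivity))] at this
          rw [hF, show q k * (σ / 2) * x + -(q k * (σ / 2) * x₀) = (q k * (σ / 2)) * (x - x₀) by
            ring]
          linarith
        have hl : ‖f ((1 - q k) * x + q k * x₀) - f x‖ ≤ A * G * (q k * y) := by
          refine (hlip f hfB G hG0 hfG _ _).trans (le_of_eq ?_)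
          rw [show (1 - q k) * x + q k * x₀ - x = -(q k * (x - x₀)) by ring, abs_neg, abs_mul,
            abs_of_pos (hq0 k)]
        have hl2 : ‖f ((1 - q k) * x + q k * x₀) - f x‖ ≤ 2 * G :=
          (norm_sub_le _ _).trans (by linarith [hfG x, hfG ((1 - q k) * x + q k * x₀)])
        set e := ‖f ((1 - q k) * x + q k * x₀) - f x‖ with he
        have he0 : 0 ≤ e := norm_nonneg _
        have h1 : e * F ≤ B * G * (q k * y) := by
          have : e * F ≤ e := mul_le_of_le_one_right he0 hF1
          have h3 : A * G * (q k * y) ≤ B * G * (q k * y) := by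
            gcongr
            rw [hB]
            have : 0 < 2 / (σ / 2) := by positivity
            linarith
          linarith
        have h2 : e * F * (q k * y) ≤ B * G := by
          have h3 : e * F * (q k * y) = e * (2 / σ) * (σ / 2 * (q k * y) * F) := by
            field_simp
          have h4 : e * (2 / σ) * (σ / 2 * (q k * y) * F) ≤ e * (2 / σ) * 1 := by gcongr
          have h5 : e * (2 / σ) * 1 ≤ 2 * G * (2 / σ) := by rw [mul_one]; gcongr
          have h6 : 2 * G * (2 / σ) = 2 / (σ / 2) * G := by field_simp
          have h7 : 2 / (σ / 2) * G ≤ B * G := by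
            gcongr; rw [hB]; linarith
          linarith
        have h8 := le_telescoping_of_le_of_mul_le (mul_nonneg he0 hF0) ht0 h1 h2
        have h9 : ‖f ((1 - q k) * x + q k * x₀)‖ ≤ M + e := by
          have := norm_add_le (f x) (f ((1 - q k) * x + q k * x₀) - f x)
          rw [add_sub_cancel] at this
          linarith [hfM x hx]
        rw [norm_mul, Complex.norm_real, Real.norm_of_nonneg hF0]
        calc _ ≤ (M + e) * F := by gcongr
          _ = M * F + e * F := by ring
          _ ≤ M + e * F := by gcongr; exact mul_le_of_le_one_right hM hF1
          _ ≤ _ := by linarith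
      refine (norm_sum_le _ _).trans ((Finset.sum_le_sum fun k _ => hterm k).trans ?_)
      rw [Finset.sum_add_distrib, Finset.sum_const, Finset.card_range, nsmul_eq_mul,
        ← Finset.mul_sum]
      have htel := Finset.sum_range_sub'
        (fun k => (1 / 2 : ℝ) ^ k * y / (1 + (1 / 2 : ℝ) ^ k * y)) K
      have hy0 : 0 ≤ y := abs_nonneg _
      have hle : ∑ k ∈ Finset.range K, (2 * (q k * y) / (1 + 2 * (q k * y)) -
          q k * y / (1 + q k * y)) ≤ 1 := by
        have h2q : ∀ k, 2 * (q k * y) = (1 / 2) ^ k * y := fun k => by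
          simp only [hq, pow_succ]; ring
        rw [(Finset.sum_congr rfl fun k _ => by rw [h2q]).trans htel]
        have h3 : (1 / 2 : ℝ) ^ 0 * y / (1 + (1 / 2 : ℝ) ^ 0 * y) ≤ 1 := by
          rw [div_le_one (by positivity)]; linarith
        have h4 : 0 ≤ (1 / 2 : ℝ) ^ K * y / (1 + (1 / 2 : ℝ) ^ K * y) := by positivity
        linarith
      have := mul_le_mul_of_nonneg_left hle (show 0 ≤ 6 * (B * G) by positivity)
      linarith
    have hx₀ := h _ hg (K * M + 6 * (B * G)) (by positivity) hgH x₀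
    have hval : ∀ k, f ((1 - q k) * x₀ + q k * x₀) *
        (fejer (q k * (σ / 2) * x₀ + -(q k * (σ / 2) * x₀)) : ℂ) = f x₀ := fun k => by
      rw [add_neg_cancel, fejer_zero, show (1 - q k) * x₀ + q k * x₀ = x₀ by ring]; simp
    simp only [hval, Finset.sum_const, Finset.card_range, nsmul_eq_mul, norm_mul,
      Complex.norm_natCast] at hx₀
    have h10 : C * (K * M + 6 * (B * G)) ≤ K * (C * M + G / 2) := by
      nlinarith [mul_le_mul_of_nonneg_right hK1 hG0]
    exact le_of_mul_le_mul_left (hx₀.trans h10) hK0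
  have : G ≤ C * M + G / 2 := ciSup_le key
  exact fun x => (hfG x).trans (by linarith)

lemma sum_one_div_sq_le {W : ℝ} (hW : 1 < W) (n : ℕ) :
    ∑ i ∈ Finset.range n, 1 / (W + i) ^ 2 ≤ 1 / (W - 1) := by
  have h : ∑ i ∈ Finset.range n, 1 / (W + i) ^ 2 ≤ 1 / (W - 1) - 1 / (W + n - 1) := by
    induction n with
    | zero => simp
    | succ n ih =>
      rw [Finset.sum_range_succ]
      have hn : (0 : ℝ) ≤ n := n.cast_nonneg
      have h1 : 1 / (W + n) ^ 2 ≤ 1 / (W + n - 1) - 1 / (W + (n + 1 : ℕ) - 1) := by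
        push_cast
        have h2 : 0 < W + n - 1 := by linarith
        have h3 : 0 < W + n := by linarith
        rw [show W + ((n : ℝ) + 1) - 1 = W + n by ring, div_sub_div _ _ h2.ne' h3.ne',
          div_le_div_iff₀ (by positivity) (by positivity)]
        nlinarith
      linarith
  have h2 : 0 ≤ 1 / (W + n - 1) := by
    have hn : (0 : ℝ) ≤ n := n.cast_nonneg
    have : 0 < W + n - 1 := by linarith
    positivity
  linarith

/-- A sum of Fejér kernels centred at the integers in `[-J, J]`. -/
def fejerSum (J : ℕ) (x : ℝ) : ℝ := ∑ i ∈ Finset.range (2 * J + 1), fejer (x - (i - J))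

lemma fejerSum_neg (J : ℕ) (x : ℝ) : fejerSum J (-x) = fejerSum J x := by
  rw [fejerSum, fejerSum, ← Finset.sum_range_reflect]
  refine Finset.sum_congr rfl fun i hi => ?_
  rw [← fejer_neg]
  congr 1
  have : i ≤ 2 * J := by have := Finset.mem_range.1 hi; omega
  rw [show 2 * J + 1 - 1 - i = 2 * J - i by omega, Nat.cast_sub this]
  push_cast
  ring

lemma fejerSum_nonneg (J : ℕ) (x : ℝ) : 0 ≤ fejerSum J x :=
  Finset.sum_nonneg fun _ _ => fejer_nonneg _

lemma one_fourth_le_fejerSum {J : ℕ} {x : ℝ} (hx : |x| ≤ J) : 1 / 4 ≤ fejerSum J x := by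
  have h1 := abs_sub_round x
  obtain ⟨h2, h3⟩ := abs_le.1 hx
  obtain ⟨h4, h5⟩ := abs_le.1 h1
  have h6 : round x < J + 1 := by
    have : (round x : ℝ) < (J + 1 : ℤ) := by push_cast; linarith
    exact_mod_cast this
  have h7 : -(J : ℤ) - 1 < round x := by
    have : ((-(J : ℤ) - 1 : ℤ) : ℝ) < round x := by push_cast; linarith
    exact_mod_cast this
  obtain ⟨i, hi⟩ := Int.eq_ofNat_of_zero_le (show 0 ≤ round x + J by omega)
  have h8 : (i : ℝ) - J = round x := by
    have : ((i : ℤ) : ℝ) = ((round x + J : ℤ) : ℝ) := by rw [hi]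
    push_cast at this
    linarith
  refine le_trans ?_ (Finset.single_le_sum (f := fun i : ℕ => fejer (x - (i - J)))
    (fun _ _ => fejer_nonneg _) (Finset.mem_range.2 (show i < 2 * J + 1 by omega)))
  simp only [h8]
  exact one_fourth_le_fejer h1

lemma fejerSum_le {J : ℕ} {x W : ℝ} (hW : 1 < W) (hx : J + W ≤ |x|) :
    fejerSum J x ≤ 1 / (W - 1) := by
  wlog h0 : 0 ≤ x generalizing x
  · rw [← fejerSum_neg]
    exact this (by rwa [abs_neg]) (by linarith)
  rw [abs_of_nonneg h0] at hx
  refine le_trans ?_ (sum_one_div_sq_le hW (2 * J + 1))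
  rw [fejerSum, ← Finset.sum_range_reflect]
  refine Finset.sum_le_sum fun i hi => ?_
  have hi : i ≤ 2 * J := by have := Finset.mem_range.1 hi; omega
  rw [show 2 * J + 1 - 1 - i = 2 * J - i by omega, Nat.cast_sub hi]
  push_cast
  have h1 : W + i ≤ x - (2 * J - i - J) := by linarith
  have h2 : 0 < W + i := by have : (0 : ℝ) ≤ i := i.cast_nonneg; linarith
  rw [le_div_iff₀ (by positivity)]
  refine le_trans ?_ (sq_mul_fejer_le (x - (2 * J - i - J)))
  rw [mul_comm]
  exact mul_le_mul_of_nonneg_right (pow_le_pow_left₀ h2.le h1 2) (fejer_nonneg _)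

lemma isTrigLimit_fejerSum (J : ℕ) {ε : ℝ} (hε : 0 < ε) (x₀ : ℝ) :
    IsTrigLimit ε (fun x => (fejerSum J (ε * (x - x₀)) : ℂ)) := by
  have h : IsTrigLimit ε (fun x => ∑ i ∈ Finset.range (2 * J + 1),
      (fejer (ε * x + (-(ε * x₀) - (i - J))) : ℂ)) := by
    refine IsTrigLimit.sum _ fun i _ => ?_
    have := isTrigLimit_fejer.comp_affine ε (-(ε * x₀) - (i - J))
    rwa [abs_of_pos hε, mul_one] at this
  convert h using 2 with x
  rw [fejerSum, Complex.ofReal_sum]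
  refine Finset.sum_congr rfl fun i _ => ?_
  congr 2
  ring

/-- A trigonometric product with prescribed zeros, whose modulus is periodic. -/
lemma exists_trigProduct (Z : Finset ℝ) {R : ℝ} (hR : 0 < R) (x₀ : ℝ) :
    ∃ p : ℝ → ℝ, (fun x => (p x : ℂ)) ∈ trigSpan (Z.card / (4 * R)) ∧ Continuous p ∧
      (∀ z ∈ Z, p z = 0) ∧
      ∃ m, |m - x₀| ≤ R ∧ 0 < |p m| ∧ ∀ x, |p x| ≤ |p m| := by
  set p : ℝ → ℝ := fun x => ∏ z ∈ Z, Real.cos (2 * Real.pi * (1 / (4 * R) * x) +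
    (-(Real.pi * z / (2 * R)) - Real.pi / 2)) with hp
  have hpc : Continuous p := by fun_prop
  have hper : Function.Periodic (fun x => |p x|) (2 * R) := by
    intro x
    simp only [hp, Finset.abs_prod]
    refine Finset.prod_congr rfl fun z _ => ?_
    rw [show 2 * Real.pi * (1 / (4 * R) * (x + 2 * R)) +
        (-(Real.pi * z / (2 * R)) - Real.pi / 2) = 2 * Real.pi * (1 / (4 * R) * x) +
        (-(Real.pi * z / (2 * R)) - Real.pi / 2) + Real.pi by field_simp; ring, Real.cos_add_pi,
      abs_neg]
  have hne : ∃ y, p y ≠ 0 := by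
    have hcount : (⋃ z ∈ Z, range fun k : ℤ => ((2 * k + 1) * Real.pi / 2 -
        (-(Real.pi * z / (2 * R)) - Real.pi / 2)) / (2 * Real.pi * (1 / (4 * R)))).Countable :=
      Z.countable_toSet.biUnion fun z _ => countable_range _
    obtain ⟨y, hy⟩ := (hcount.dense_compl ℝ).nonempty
    refine ⟨y, Finset.prod_ne_zero_iff.2 fun z hz h0 => hy ?_⟩
    obtain ⟨k, hk⟩ := Real.cos_eq_zero_iff.1 h0
    refine mem_biUnion hz ⟨k, ?_⟩
    have hpi := Real.pi_pos
    simp only [← hk]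
    field_simp
    ring
  obtain ⟨m, hm, hmax⟩ := (isCompact_Icc (a := x₀ - R) (b := x₀ + R)).exists_isMaxOn
    ⟨x₀, by constructor <;> linarith⟩ hpc.abs.continuousOn
  have hmax' : ∀ x, |p x| ≤ |p m| := by
    intro x
    obtain ⟨y, hy, hxy⟩ := hper.exists_mem_Ico (by positivity) x (x₀ - R)
    have hxy : |p x| = |p y| := hxy
    rw [hxy]
    exact hmax ⟨hy.1, by linarith [hy.2]⟩
  refine ⟨p, ?_, hpc, fun z hz => ?_, m, ?_, ?_, hmax'⟩
  · have := prod_mem_trigSpan Z (fun z x => (Real.cos (2 * Real.pi * (1 / (4 * R) * x) +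
      (-(Real.pi * z / (2 * R)) - Real.pi / 2)) : ℂ)) (fun _ => |1 / (4 * R)|)
      fun z _ => cos_mem_trigSpan _ _
    rw [Finset.sum_const, nsmul_eq_mul, abs_of_pos (by positivity), mul_one_div] at this
    simpa only [hp, Complex.ofReal_prod] using this
  · refine Finset.prod_eq_zero hz ?_
    rw [show 2 * Real.pi * (1 / (4 * R) * z) + (-(Real.pi * z / (2 * R)) - Real.pi / 2) =
      -(Real.pi / 2) by field_simp; ring, Real.cos_neg, Real.cos_pi_div_two]
  · exact abs_le.2 ⟨by linarith [hm.1], by linarith [hm.2]⟩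
  · obtain ⟨y, hy⟩ := hne
    exact (abs_pos.2 hy).trans_le (hmax' y)

lemma IsTrigSampling.exists_lt_ncard {τ C ε : ℝ} {H : Set ℝ} (h : IsTrigSampling τ C H)
    (hC : 0 ≤ C) (hH : UniformlyDiscrete H) (hε : 0 < ε) :
    ∃ w ≥ 0, ∀ R > 0, ∀ x₀, 4 * R * (τ - ε) < (H ∩ closedBall x₀ (R + w)).ncard := by
  refine ⟨(4 * C + 3) / ε, by positivity, fun R hR x₀ => ?_⟩
  set w := (4 * C + 3) / ε with hw
  by_contra! hcard
  have hfin : (H ∩ closedBall x₀ (R + w)).Finite := hH.finite_inter_closedBall _ _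
  rw [Set.ncard_eq_toFinset_card _ hfin] at hcard
  obtain ⟨p, hp, hpc, hpZ, m, hm, hpm, hmax⟩ := exists_trigProduct hfin.toFinset hR x₀
  set J := ⌈ε * R⌉₊ with hJ
  have hJ1 : ε * R ≤ J := Nat.le_ceil _
  have hJ2 : (J : ℝ) < ε * R + 1 := Nat.ceil_lt_add_one (by positivity)
  have hg : IsTrigLimit τ (fun x => (p x : ℂ) * (fejerSum J (ε * (x - x₀)) : ℂ)) := by
    refine ((IsTrigLimit.of_mem_trigSpan hp (by fun_prop) (M := |p m|) fun x => ?_).mul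
      (isTrigLimit_fejerSum J hε x₀)).mono ?_
    · rw [Complex.norm_real]; exact hmax x
    · have : (hfin.toFinset.card : ℝ) / (4 * R) ≤ τ - ε := by
        rw [div_le_iff₀ (by positivity)]; linarith
      linarith
  have key := h _ hg (|p m| * (1 / (4 * C + 1))) (by positivity) (fun x hx => ?_) m
  · rw [norm_mul, Complex.norm_real, Complex.norm_real, Real.norm_of_nonneg (fejerSum_nonneg _ _),
      Real.norm_eq_abs] at key
    have h1 : 1 / 4 ≤ fejerSum J (ε * (m - x₀)) := by
      refine one_fourth_le_fejerSum ?_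
      rw [abs_mul, abs_of_pos hε]
      exact (mul_le_mul_of_nonneg_left hm hε.le).trans hJ1
    have h2 : C * (|p m| * (1 / (4 * C + 1))) < |p m| * (1 / 4) := by
      rw [mul_left_comm]
      refine mul_lt_mul_of_pos_left ?_ hpm
      rw [mul_one_div, div_lt_div_iff₀ (by positivity) (by norm_num)]
      linarith
    nlinarith
  · rw [norm_mul, Complex.norm_real, Complex.norm_real, Real.norm_of_nonneg (fejerSum_nonneg _ _),
      Real.norm_eq_abs]
    by_cases hxZ : x ∈ closedBall x₀ (R + w)
    · rw [hpZ x (hfin.mem_toFinset.2 ⟨hx, hxZ⟩)]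
      simp only [abs_zero, zero_mul]
      positivity
    · rw [mem_closedBall, Real.dist_eq, not_le] at hxZ
      refine mul_le_mul (hmax x) ?_ (fejerSum_nonneg _ _) (abs_nonneg _)
      have h3 : (J : ℝ) + (4 * C + 2) ≤ |ε * (x - x₀)| := by
        rw [abs_mul, abs_of_pos hε]
        have h4 := mul_lt_mul_of_pos_left hxZ hε
        have h5 : ε * w = 4 * C + 3 := by rw [hw]; field_simp
        rw [mul_add, h5] at h4
        linarith
      refine (fejerSum_le (by linarith) h3).trans (le_of_eq ?_)
      rw [show 4 * C + 2 - 1 = 4 * C + 1 by ring]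

lemma UniformlyDiscrete.exists_ncard_le {H : Set ℝ} (hH : UniformlyDiscrete H) :
    ∃ δ > 0, ∀ x, ∀ r ≥ 0, ((H ∩ closedBall x r).ncard : ℝ) ≤ 2 * r / δ + 2 := by
  obtain ⟨δ, hδ, h⟩ := hH
  refine ⟨δ, hδ, fun x r hr => ?_⟩
  have h1 := (ncard_inter_closedBall_le hδ h r x).2
  rw [Int.card_Icc] at h1
  have h2 : (((⌊r / δ⌋ + 1 - ⌊-r / δ⌋).toNat : ℤ) : ℝ) ≤ 2 * r / δ + 2 := by
    have h3 := Int.floor_le (r / δ)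
    have h4 := Int.lt_floor_add_one (-r / δ)
    have h5 : -r / δ = -(r / δ) := neg_div _ _
    have h6 : 0 ≤ r / δ := by positivity
    rw [Int.toNat_of_nonneg]
    · push_cast
      rw [mul_div_assoc]
      linarith
    · have : ⌊-r / δ⌋ ≤ ⌊r / δ⌋ := Int.floor_mono (by linarith)
      linarith
  refine le_trans ?_ h2
  exact_mod_cast h1

lemma UniformlyDiscrete.isCoboundedUnder_density {H : Set ℝ} (hH : UniformlyDiscrete H) :
    IsCoboundedUnder (· ≥ ·) atTop (fun r : ℝ => ⨅ x : ℝ,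
      (Nat.card ↥(H ∩ closedBall x r) : ℝ) / (volume (closedBall x r)).toReal) := by
  obtain ⟨η, hη, hup⟩ := hH.exists_ncard_le
  refine IsBoundedUnder.isCoboundedUnder_ge
    (isBoundedUnder_of_eventually_le (a := 1 / η + 1) ?_)
  filter_upwards [eventually_ge_atTop 1] with r hr
  refine (ciInf_le ⟨0, by rintro _ ⟨y, rfl⟩; positivity⟩ 0).trans ?_
  rw [Real.volume_closedBall, ENNReal.toReal_ofReal (by positivity), div_le_iff₀ (by positivity)]
  refine (hup 0 r (by linarith)).trans ?_
  have : 2 * r / η = 1 / η * (2 * r) := by ring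
  rw [this]
  linarith

lemma IsTrigSampling.lt_lowerUniformDensity {σ C : ℝ} {H : Set ℝ} (h : IsTrigSampling σ C H)
    (hσ : 0 < σ) (hC : 0 ≤ C) (hH : UniformlyDiscrete H) : 2 * σ < lowerUniformDensity H := by
  obtain ⟨δ, hδ, hS⟩ := h.exists_gt hσ
  obtain ⟨w, hw, hcount⟩ := hS.exists_lt_ncard (by positivity) hH (half_pos hδ)
  refine lt_of_lt_of_le (b := 2 * σ + δ / 2) (by linarith)
    (le_liminf_of_le hH.isCoboundedUnder_density ?_)
  filter_upwards [eventually_gt_atTop w, eventually_gt_atTop (w * (2 * σ + δ) / (δ / 2))]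
    with r hr1 hr2
  refine le_ciInf fun x => ?_
  have hc := hcount (r - w) (by linarith) x
  rw [sub_add_cancel] at hc
  have hr0 : 0 < r := by linarith
  rw [Real.volume_closedBall, ENNReal.toReal_ofReal (by positivity), le_div_iff₀ (by positivity)]
  refine le_trans ?_ hc.le
  rw [div_lt_iff₀ (by positivity)] at hr2
  nlinarith

lemma lowerUniformDensity_nonneg {H : Set ℝ} (hH : UniformlyDiscrete H) :
    0 ≤ lowerUniformDensity H :=
  le_liminf_of_le hH.isCoboundedUnder_density
    (Eventually.of_forall fun _ => Real.iInf_nonneg fun _ => by positivity)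
lemma IsSamplingSet.exists_isTrigSampling {Ω : Set V} {u c : V} {σ : ℝ} {H : Set ℝ}
    (hu : ‖u‖ = 1) (h : IsSamplingSet Ω {x | ⟪x, u⟫ ∈ H})
    (hΩ : ∀ s : ℝ, |s| ≤ σ → c + s • u ∈ Ω) : ∃ C > 0, IsTrigSampling σ C H := by
  obtain ⟨C, hC, h⟩ := h
  refine ⟨C, hC, fun g hg M hM hgH t => ?_⟩
  have hn : ∀ x : V, ‖Complex.exp (↑(2 * Real.pi * ⟪x, c⟫) * Complex.I) * g ⟪x, u⟫‖ =
      ‖g ⟪x, u⟫‖ := fun x => by rw [norm_mul, Complex.norm_exp_ofReal_mul_I, one_mul]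
  have h1 := h _ (hg.memBernstein hΩ) (t • u)
  simp only [hn] at h1
  rw [real_inner_smul_left, real_inner_self_eq_norm_sq, hu, one_pow, mul_one] at h1
  refine h1.trans (mul_le_mul_of_nonneg_left (Real.sSup_le ?_ hM) hC.le)
  rintro _ ⟨x, hx, rfl⟩
  exact hgH _ hx

lemma Convex.exists_add_smul_mem {E : Type*} [AddCommGroup E] [Module ℝ E] {Ω : Set E}
    (hΩ : Convex ℝ Ω) {u : E} {σ : ℝ} (hσ : 0 < σ) (h : (2 * σ) • u ∈ Ω - Ω) : ∃ c, ∀ s : ℝ, |s| ≤ σ → c + s • u ∈ Ω := by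
  obtain ⟨p, hp, q, hq, hpq⟩ := h
  refine ⟨(1 / 2 : ℝ) • (p + q), fun s hs => ?_⟩
  obtain ⟨h1, h2⟩ := abs_le.1 hs
  have h3 : u = (1 / (2 * σ)) • (p - q) := by
    have hpq : p - q = (2 * σ) • u := hpq
    rw [hpq, smul_smul, one_div, inv_mul_cancel₀ (by positivity), one_smul]
  have h4 : (1 / 2 : ℝ) • (p + q) + s • u =
      (1 / 2 + s / (2 * σ)) • p + (1 / 2 - s / (2 * σ)) • q := by
    rw [h3]
    module
  rw [h4]
  have h5 : |s / (2 * σ)| ≤ 1 / 2 := by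
    rw [abs_div, abs_of_pos (show 0 < 2 * σ by positivity), div_le_iff₀ (by positivity)]
    linarith
  obtain ⟨h6, h7⟩ := abs_le.1 h5
  exact hΩ hp hq (by linarith) (by linarith) (by ring)

theorem IsSamplingSet.density_smul_notMem {Ω : Set V} (hΩ : Convex ℝ Ω)
    (hc : IsCompact Ω) (hpos : 0 < volume Ω)
    {u : V} (hu : ‖u‖ = 1) {H : Set ℝ} (hH : UniformlyDiscrete H)
    (h : IsSamplingSet Ω {x | ⟪x, u⟫ ∈ H}) : lowerUniformDensity H • u ∉ Ω - Ω := by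
  intro hD
  obtain ⟨σ, hσ, hσD, hσu⟩ : ∃ σ > 0, lowerUniformDensity H ≤ 2 * σ ∧ (2 * σ) • u ∈ Ω - Ω := by
    rcases (lowerUniformDensity_nonneg hH).eq_or_lt with h0 | h0
    · have hnhds : Ω - Ω ∈ 𝓝 (0 : V) :=
        Measure.sub_mem_nhds_zero_of_addHaar_pos_ne_top volume Ω hc.measurableSet hpos
          hc.measure_lt_top.ne
      have hc : ContinuousAt (fun s : ℝ => (2 * s) • u) 0 := by fun_prop
      have h1 : ∀ᶠ s : ℝ in 𝓝 0, (2 * s) • u ∈ Ω - Ω := hc (by simpa using hnhds)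
      obtain ⟨s, hs, hs0⟩ := ((h1.filter_mono nhdsWithin_le_nhds).and
        (self_mem_nhdsWithin (s := Ioi (0 : ℝ)))).exists
      have hs0 : 0 < s := hs0
      exact ⟨s, hs0, by rw [← h0]; positivity, hs⟩
    · exact ⟨lowerUniformDensity H / 2, by positivity, by linarith,
        by rwa [mul_div_cancel₀ _ two_ne_zero]⟩
  obtain ⟨c, hc⟩ := hΩ.exists_add_smul_mem hσ hσu
  obtain ⟨C, hC, hS⟩ := h.exists_isTrigSampling hu hc
  exact absurd (hS.lt_lowerUniformDensity hσ hC.le hH) (not_lt.2 hσD)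

lemma MemBernstein.eq_zero {f : V → ℂ} (hf : MemBernstein ∅ f) (x : V) : f x = 0 := by
  have h := hf.eq_integral_mul_fourier (χ := fun _ => 0) contDiff_const
    (HasCompactSupport.zero) (by simp) x
  rw [h]
  simp [Real.fourier_eq']

section Averages

variable {W : Type*} [NormedAddCommGroup W] [InnerProductSpace ℝ W]
  [FiniteDimensional ℝ W] [MeasurableSpace W] [BorelSpace W]
  {f φ : V → ℂ} {C : ℝ} {k : W → ℂ} {y : W → V}

lemma integrable_comp_add_mul (hf : Continuous f) (hC : ∀ x, ‖f x‖ ≤ C) (hk : Integrable k)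
    (hy : Continuous y) (x : V) : Integrable (fun t => f (x + y t) * k t) :=
  hk.bdd_mul (by fun_prop : Continuous fun t => f (x + y t)).aestronglyMeasurable
    (ae_of_all _ fun _ => hC _)

lemma continuous_integral_comp_add_mul (hf : Continuous f) (hC : ∀ x, ‖f x‖ ≤ C)
    (hk : Integrable k) (hy : Continuous y) : Continuous (fun x => ∫ t, f (x + y t) * k t) := by
  refine continuous_of_dominated (bound := fun t => C * ‖k t‖)
    (fun x => (integrable_comp_add_mul hf hC hk hy x).aestronglyMeasurable)
    (fun x => ae_of_all _ fun t => ?_) (hk.norm.const_mul C) (ae_of_all _ fun t => by fun_prop)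
  rw [norm_mul]
  gcongr
  exact hC _

lemma norm_integral_comp_add_mul_le {M : ℝ} {x : V} (hM : ∀ t, ‖f (x + y t)‖ ≤ M)
    (hk : Integrable k) : ‖∫ t, f (x + y t) * k t‖ ≤ (∫ t, ‖k t‖) * M := by
  rw [mul_comm, ← integral_const_mul]
  refine norm_integral_le_of_norm_le (hk.norm.const_mul M) (ae_of_all _ fun t => ?_)
  rw [norm_mul]
  gcongr
  exact hM t

/-- Averaging translates of `f` against `k` multiplies the spectrum by the corresponding
exponential integral. -/
lemma integral_average_mul_fourier (hf : Continuous f) (hC : ∀ x, ‖f x‖ ≤ C) (hk : Integrable k)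
    (hy : Continuous y) (hφ : ContDiff ℝ (⊤ : ℕ∞) φ) (hφc : HasCompactSupport φ) :
    ∫ x, (∫ t, f (x + y t) * k t) * 𝓕 φ x =
      ∫ x, f x * 𝓕 (fun s =>
        (∫ t, Complex.exp (↑(2 * Real.pi * ⟪s, y t⟫) * Complex.I) * k t) * φ s) x := by
  have hFi := hφc.integrable_fourier hφ
  have hFc := hφc.continuous_fourier hφ
  have hint1 : Integrable (fun p : V × W => f (p.1 + y p.2) * (𝓕 φ p.1 * k p.2))
      (volume.prod volume) :=
    (hFi.mul_prod hk).bdd_mul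
      (by fun_prop : Continuous fun p : V × W => f (p.1 + y p.2)).aestronglyMeasurable
      (ae_of_all _ fun _ => hC _)
  have hskew : MeasurePreserving (fun p : W × V => (p.1, p.2 - y p.1))
      (volume.prod volume) (volume.prod volume) :=
    (MeasurePreserving.id volume).skew_product (g := fun t x => x - y t)
      (by fun_prop : Continuous fun p : W × V => p.2 - y p.1).measurable
      (ae_of_all _ fun t => (measurePreserving_sub_right volume (y t)).map_eq)
  have hint2 : Integrable (fun p : W × V => f p.2 * (k p.1 * 𝓕 φ (p.2 - y p.1)))
      (volume.prod volume) :=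
    (hskew.integrable_comp_of_integrable (hk.mul_prod hFi)).bdd_mul
      (by fun_prop : Continuous fun p : W × V => f p.2).aestronglyMeasurable
      (ae_of_all _ fun _ => hC _)
  calc ∫ x, (∫ t, f (x + y t) * k t) * 𝓕 φ x
      = ∫ x, ∫ t, f (x + y t) * (𝓕 φ x * k t) := by
        refine integral_congr_ae (ae_of_all _ fun x => ?_)
        simp only
        rw [← integral_mul_const]
        congr 1; ext t; ring
    _ = ∫ t, ∫ x, f (x + y t) * (𝓕 φ x * k t) := integral_integral_swap hint1
    _ = ∫ t, ∫ x, f x * (k t * 𝓕 φ (x - y t)) := by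
        refine integral_congr_ae (ae_of_all _ fun t => ?_)
        simp only
        rw [← integral_add_right_eq_self (fun x => f x * (k t * 𝓕 φ (x - y t))) (y t)]
        congr 1; ext x
        rw [add_sub_cancel_right]; ring
    _ = ∫ x, ∫ t, f x * (k t * 𝓕 φ (x - y t)) := integral_integral_swap hint2
    _ = _ := by
        refine integral_congr_ae (ae_of_all _ fun x => ?_)
        simp only
        rw [integral_const_mul]
        congr 1
        have hint3 : Integrable (fun p : W × V =>
            (Complex.exp (↑(-2 * Real.pi * ⟪p.2, x⟫) * Complex.I) *
              Complex.exp (↑(2 * Real.pi * ⟪p.2, y p.1⟫) * Complex.I)) * (k p.1 * φ p.2))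
            (volume.prod volume) := by
          refine (hk.mul_prod (hφc.integrable_of_contDiff hφ)).bdd_mul (c := 1) ?_
            (ae_of_all _ fun p => ?_)
          · exact (by fun_prop : Continuous fun p : W × V =>
              (Complex.exp (↑(-2 * Real.pi * ⟪p.2, x⟫) * Complex.I) *
              Complex.exp (↑(2 * Real.pi * ⟪p.2, y p.1⟫) * Complex.I))).aestronglyMeasurable
          · rw [norm_mul, Complex.norm_exp_ofReal_mul_I, Complex.norm_exp_ofReal_mul_I, one_mul]
        simp only [← fourier_exp_mul]
        simp only [Real.fourier_eq', smul_eq_mul]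
        refine Eq.trans ?_ ((integral_integral_swap (f := fun t s =>
          (Complex.exp (↑(-2 * Real.pi * ⟪s, x⟫) * Complex.I) *
            Complex.exp (↑(2 * Real.pi * ⟪s, y t⟫) * Complex.I)) * (k t * φ s)) hint3).trans ?_)
        · refine integral_congr_ae (ae_of_all _ fun t => ?_)
          simp only
          rw [← integral_const_mul]
          congr 1; ext s; ring
        · refine integral_congr_ae (ae_of_all _ fun s => ?_)
          simp only
          rw [← mul_assoc, mul_comm _ (φ s), ← mul_assoc, ← integral_const_mul]
          congr 1; ext t; ring

end Averages

namespace MemBernstein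

variable {W : Type*} [NormedAddCommGroup W] [InnerProductSpace ℝ W]
  [FiniteDimensional ℝ W] [MeasurableSpace W] [BorelSpace W]
  {f m : V → ℂ} {Ω : Set V} {k : W → ℂ} {y : W → V}

lemma average (hf : MemBernstein Ω f) (hk : Integrable k) (hy : Continuous y)
    (hm : ContDiff ℝ (⊤ : ℕ∞) m)
    (hmk : ∀ s, m s = ∫ t, Complex.exp (↑(2 * Real.pi * ⟪s, y t⟫) * Complex.I) * k t) :
    MemBernstein (Ω ∩ tsupport m) (fun x => ∫ t, f (x + y t) * k t) := by
  obtain ⟨hc, ⟨C, hC⟩, hs⟩ := hf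
  refine ⟨continuous_integral_comp_add_mul hc hC hk hy,
    ⟨_, fun x => norm_integral_comp_add_mul_le (fun t => hC _) hk⟩, fun φ hφ hφc hd => ?_⟩
  rw [integral_average_mul_fourier hc hC hk hy hφ hφc]
  simp only [← hmk]
  refine hs _ (hm.mul hφ) hφc.mul_left ?_
  rw [← subset_empty_iff, ← hd]
  rintro s ⟨h1, h2⟩
  exact ⟨tsupport_mul_subset_right h1, h2, tsupport_mul_subset_left h1⟩

lemma average_eq_self (hf : MemBernstein Ω f) (hk : Integrable k) (hy : Continuous y)
    (hm : ContDiff ℝ (⊤ : ℕ∞) m)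
    (hmk : ∀ s, m s = ∫ t, Complex.exp (↑(2 * Real.pi * ⟪s, y t⟫) * Complex.I) * k t)
    (hd : tsupport (fun s => 1 - m s) ∩ Ω = ∅) (x : V) :
    ∫ t, f (x + y t) * k t = f x := by
  obtain ⟨hc, ⟨C, hC⟩, hs⟩ := id hf
  have hF := hf.average hk hy hm hmk
  suffices h : MemBernstein ∅ (fun x => (∫ t, f (x + y t) * k t) + (-1) * f x) by
    have := h.eq_zero x
    linear_combination this
  refine ⟨hF.1.add (continuous_const.mul hc), ?_, fun φ hφ hφc _ => ?_⟩
  · obtain ⟨C', hC'⟩ := hF.2.1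
    refine ⟨C' + C, fun x => norm_add_le_of_le (hC' x) ?_⟩
    simpa using hC x
  · have hφi := hφc.integrable_fourier hφ
    have h1 : ∫ x, f x * 𝓕 (fun s => (1 - m s) * φ s) x = 0 := by
      refine hs _ ((contDiff_const.sub hm).mul hφ) hφc.mul_left ?_
      rw [← subset_empty_iff, ← hd]
      exact inter_subset_inter_left _ tsupport_mul_subset_left
    have h2 : ∀ x, 𝓕 (fun s => (1 - m s) * φ s) x = 𝓕 φ x - 𝓕 (fun s => m s * φ s) x := by
      intro x
      have hi : ∀ ψ : V → ℂ, ContDiff ℝ (⊤ : ℕ∞) ψ → HasCompactSupport ψ → Integrable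
          (fun s => Complex.exp (↑(-2 * Real.pi * ⟪s, x⟫) * Complex.I) • ψ s) := fun ψ h1 h2 =>
        (h2.integrable_of_contDiff h1).bdd_mul (c := 1)
          (by fun_prop : Continuous fun s : V =>
            Complex.exp (↑(-2 * Real.pi * ⟪s, x⟫) * Complex.I)).aestronglyMeasurable
          (ae_of_all _ fun s => (Complex.norm_exp_ofReal_mul_I _).le)
      rw [Real.fourier_eq', Real.fourier_eq', Real.fourier_eq',
        ← integral_sub (hi _ hφ hφc) (hi _ (hm.mul hφ) hφc.mul_left)]
      congr 1; ext s
      simp only [smul_eq_mul]; ring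
    have h3 := integral_average_mul_fourier hc hC hk hy hφ hφc
    simp only [← hmk] at h3
    have hmi : Integrable (𝓕 fun s => m s * φ s) :=
      HasCompactSupport.integrable_fourier hφc.mul_left (hm.mul hφ)
    simp only [h2, mul_sub] at h1
    rw [integral_sub (hf.integrable_mul hφi) (hf.integrable_mul hmi), ← h3, sub_eq_zero] at h1
    simp only [add_mul, mul_assoc]
    rw [integral_add (hF.integrable_mul hφi) ((hf.integrable_mul hφi).const_mul (-1)),
      integral_const_mul, h1]
    ring

/-- The restriction of a function in a Bernstein space to a line. -/
lemma comp_line (hf : MemBernstein Ω f) {u : V} {I : Set ℝ} (hI : ∀ s ∈ Ω, ⟪s, u⟫ ∈ I) (x : V) :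
    MemBernstein I (fun t : ℝ => f (x + t • u)) := by
  obtain ⟨hc, ⟨C, hC⟩, -⟩ := id hf
  refine ⟨by fun_prop, ⟨C, fun t => hC _⟩, fun ψ hψ hψc hd => ?_⟩
  have hcd : ContDiff ℝ (⊤ : ℕ∞) (fun s : V => ⟪s, u⟫) := contDiff_id.inner ℝ contDiff_const
  have h := hf.average (k := 𝓕 ψ) (y := fun t : ℝ => t • u) (m := fun s => ψ ⟪s, u⟫)
    (hψc.integrable_fourier hψ) (by fun_prop) (hψ.comp hcd) (fun s => by
      rw [← hψc.integral_fourier_mul_exp hψ]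
      congr 1; ext t
      rw [real_inner_smul_right]
      congr 5
      simp [mul_comm])
  have he : Ω ∩ tsupport (fun s => ψ ⟪s, u⟫) = ∅ := by
    rw [eq_empty_iff_forall_notMem]
    rintro s ⟨h1, h2⟩
    have h3 : ⟪s, u⟫ ∈ tsupport ψ := tsupport_comp_subset_preimage ψ hcd.continuous h2
    exact (eq_empty_iff_forall_notMem.1 hd) _ ⟨h3, hI s h1⟩
  rw [he] at h
  exact h.eq_zero x

end MemBernstein

/-- The component of a vector orthogonal to the unit vector `u`. -/
def perp (u s : V) : V := s - ⟪s, u⟫ • u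

lemma continuous_perp (u : V) : Continuous (perp u) := by unfold perp; fun_prop

lemma contDiff_perp (u : V) : ContDiff ℝ (⊤ : ℕ∞) (perp u) :=
  contDiff_id.sub ((contDiff_id.inner ℝ contDiff_const).smul contDiff_const)

lemma inner_perp_left {u : V} (hu : ‖u‖ = 1) (s : V) : ⟪perp u s, u⟫ = 0 := by
  rw [perp, inner_sub_left, real_inner_smul_left, real_inner_self_eq_norm_sq, hu]
  ring

lemma inner_perp_comm (u s t : V) : ⟪s, perp u t⟫ = ⟪t, perp u s⟫ := by
  simp only [perp, inner_sub_right, real_inner_smul_right]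
  rw [real_inner_comm s t]
  ring

lemma perp_add_smul (u s : V) : perp u s + ⟪s, u⟫ • u = s := by simp [perp]

/-- If `D • u ∉ Ω - Ω`, then the parts of `Ω` over small sets orthogonal to `u` have extent
less than `D` in the direction `u`, uniformly. -/
lemma exists_fiber_bound {Ω : Set V} (hc : IsCompact Ω) (hΩ : Convex ℝ Ω) (hne : Ω.Nonempty)
    {u : V} {D : ℝ} (hD : 0 ≤ D) (hDu : D • u ∉ Ω - Ω) :
    ∃ L ≥ 0, L < D ∧ ∃ η > 0, ∀ p ∈ Ω, ∀ q ∈ Ω, dist (perp u p) (perp u q) < η →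
      ⟪p, u⟫ - ⟪q, u⟫ ≤ L := by
  have hp := continuous_perp u
  obtain ⟨z, hz⟩ := hne
  have hA : IsCompact ((Ω ×ˢ Ω) ∩ {p : V × V | perp u p.1 = perp u p.2}) :=
    (hc.prod hc).inter_right (isClosed_eq (by fun_prop) (by fun_prop))
  have hcont : Continuous fun p : V × V => ⟪p.1, u⟫ - ⟪p.2, u⟫ := by fun_prop
  obtain ⟨⟨p₀, q₀⟩, ⟨⟨hp₀, hq₀⟩, hpq⟩, hmax⟩ := hA.exists_isMaxOn ⟨(z, z), ⟨hz, hz⟩, rfl⟩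
    hcont.continuousOn
  set L₀ := ⟪p₀, u⟫ - ⟪q₀, u⟫ with hL₀
  have hpq : perp u p₀ = perp u q₀ := hpq
  have hL0 : 0 ≤ L₀ := by
    have : ⟪z, u⟫ - ⟪z, u⟫ ≤ L₀ := hmax (show (z, z) ∈ _ from ⟨⟨hz, hz⟩, rfl⟩)
    linarith
  have hLD : L₀ < D := by
    by_contra! hle
    apply hDu
    have h1 : p₀ - q₀ = L₀ • u := by
      rw [← perp_add_smul u p₀, ← perp_add_smul u q₀, hpq, hL₀, sub_smul]
      simp
    have h0 : (0 : V) ∈ Ω - Ω := ⟨z, hz, z, hz, sub_self z⟩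
    have h2 := (hΩ.sub hΩ).smul_mem_of_zero_mem h0 (⟨p₀, hp₀, q₀, hq₀, h1⟩ : L₀ • u ∈ Ω - Ω)
      (t := D / L₀) ⟨by positivity, div_le_one_of_le₀ hle hL0⟩
    rcases hL0.eq_or_lt with h | h
    · have : D = 0 := by linarith
      rwa [this, zero_smul]
    · rwa [smul_smul, div_mul_cancel₀ _ h.ne'] at h2
  refine ⟨(L₀ + D) / 2, by positivity, by linarith, ?_⟩
  have hB : IsCompact ((Ω ×ˢ Ω) ∩ {p : V × V | (L₀ + D) / 2 ≤ ⟪p.1, u⟫ - ⟪p.2, u⟫}) :=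
    (hc.prod hc).inter_right (isClosed_le continuous_const hcont)
  rcases ((Ω ×ˢ Ω) ∩ {p : V × V | (L₀ + D) / 2 ≤ ⟪p.1, u⟫ - ⟪p.2, u⟫}).eq_empty_or_nonempty
    with he | he
  · refine ⟨1, one_pos, fun p hp q hq _ => ?_⟩
    by_contra! h
    exact (eq_empty_iff_forall_notMem.1 he) (p, q) ⟨⟨hp, hq⟩, h.le⟩
  · obtain ⟨⟨p₁, q₁⟩, ⟨⟨hp₁, hq₁⟩, hL₁⟩, hmin⟩ := hB.exists_isMinOn he
      (f := fun p => dist (perp u p.1) (perp u p.2)) (by fun_prop)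
    refine ⟨dist (perp u p₁) (perp u q₁), dist_pos.2 fun h => ?_, fun p hp q hq hd => ?_⟩
    · have h1 : ⟪p₁, u⟫ - ⟪q₁, u⟫ ≤ L₀ := hmax (show (p₁, q₁) ∈ _ from ⟨⟨hp₁, hq₁⟩, h⟩)
      have h2 : (L₀ + D) / 2 ≤ ⟪p₁, u⟫ - ⟪q₁, u⟫ := hL₁
      linarith
    · by_contra! h
      exact absurd (hmin (show (p, q) ∈ _ from ⟨⟨hp, hq⟩, h.le⟩)) (not_le.2 hd)

/-- A smooth finite partition of unity near a compact set, with small supports. -/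
lemma exists_finite_partition {S : Set V} (hS : IsCompact S) {r : ℝ} (hr : 0 < r) :
    ∃ (t : Finset V) (θ : V → V → ℂ) (U : Set V), IsOpen U ∧ S ⊆ U ∧
      (∀ s ∈ U, ∑ z ∈ t, θ z s = 1) ∧ ∀ z, ContDiff ℝ (⊤ : ℕ∞) (θ z) ∧ HasCompactSupport (θ z) ∧
        tsupport (θ z) ⊆ closedBall z r := by
  classical
  let _ : LinearOrder V := linearOrderOfSTO WellOrderingRel
  obtain ⟨t, -, ht, hcov⟩ := hS.finite_cover_balls (half_pos hr)
  lift t to Finset V using ht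
  let b : ∀ z : V, ContDiffBump z := fun z => ⟨r / 2, r, half_pos hr, half_lt_self hr⟩
  let ρ : V → V → ℂ := fun z s => (b z s : ℂ)
  have hρ : ∀ z, ContDiff ℝ (⊤ : ℕ∞) (ρ z) := fun z =>
    Complex.ofRealCLM.contDiff.comp (b z).contDiff
  have hρc : ∀ z, HasCompactSupport (ρ z) := fun z =>
    (b z).hasCompactSupport.comp_left Complex.ofReal_zero
  have hρt : ∀ z, tsupport (ρ z) ⊆ closedBall z r := fun z =>
    (closure_mono (t := Function.support (b z)) fun s (hs : ρ z s ≠ 0) (h : b z s = 0) =>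
      hs (by simp only [ρ, h, Complex.ofReal_zero])).trans (b z).tsupport_eq.subset
  refine ⟨t, fun z s => ρ z s * ∏ j ∈ t with j < z, (1 - ρ j s), ⋃ z ∈ (t : Set V), ball z (r / 2),
    isOpen_biUnion fun _ _ => isOpen_ball, hcov, fun s hs => ?_, fun z => ⟨?_, ?_, ?_⟩⟩
  · have h := Finset.prod_one_sub_ordered t (fun z => ρ z s)
    obtain ⟨z, hz, hzs⟩ := mem_iUnion₂.1 hs
    rw [Finset.prod_eq_zero (i := z) hz] at h
    · exact (sub_eq_zero.1 h.symm).symm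
    · simp only [ρ]
      rw [(b z).one_of_mem_closedBall (ball_subset_closedBall hzs)]
      simp
  · exact (hρ z).mul (contDiff_prod fun j _ => contDiff_const.sub (hρ j))
  · exact (hρc z).mul_right
  · exact tsupport_mul_subset_left.trans (hρt z)

lemma exists_subset_Icc_of_sub_le {T : Set ℝ} {L : ℝ} (h : ∀ p ∈ T, ∀ q ∈ T, p - q ≤ L) :
    ∃ a, T ⊆ Icc a (a + L) := by
  rcases T.eq_empty_or_nonempty with rfl | ⟨p, hp⟩
  · exact ⟨0, empty_subset _⟩
  · have hb : BddBelow T := ⟨p - L, fun q hq => by linarith [h p hp q hq]⟩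
    refine ⟨sInf T, fun q hq => ⟨csInf_le hb hq, ?_⟩⟩
    have : q - L ≤ sInf T := le_csInf ⟨p, hp⟩ fun s hs => by linarith [h q hq s hs]
    linarith

theorem isSamplingSet_of_density_smul_notMem {Ω : Set V} (hc : IsCompact Ω) (hΩ : Convex ℝ Ω)
    (hne : Ω.Nonempty) {u : V} (hu : ‖u‖ = 1) {H : Set ℝ} (hH : UniformlyDiscrete H)
    (hD : lowerUniformDensity H • u ∉ Ω - Ω) : IsSamplingSet Ω {x | ⟪x, u⟫ ∈ H} := by
  obtain ⟨L, hL, hLD, η, hη, hfib⟩ :=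
    exists_fiber_bound hc hΩ hne (lowerUniformDensity_nonneg hH) hD
  obtain ⟨C, hC, hS⟩ := exists_sampling_const_of_lt_lowerUniformDensity hH
    (σ := L / 2) (by positivity) (by linarith)
  obtain ⟨t, θ, U, hU, hSU, hsum, hθ⟩ := exists_finite_partition
    (hc.image (continuous_perp u)) (r := η / 4) (by positivity)
  have hk : ∀ z, Integrable (𝓕 (θ z)) := fun z => (hθ z).2.1.integrable_fourier (hθ z).1
  have hm : ∀ z, ContDiff ℝ (⊤ : ℕ∞) (fun s => θ z (perp u s)) := fun z =>
    (hθ z).1.comp (contDiff_perp u)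
  have hmk : ∀ z s, θ z (perp u s) =
      ∫ t, Complex.exp (↑(2 * Real.pi * ⟪s, perp u t⟫) * Complex.I) * 𝓕 (θ z) t := by
    intro z s
    simp only [inner_perp_comm u s]
    rw [(hθ z).2.1.integral_fourier_mul_exp (hθ z).1]
  refine ⟨∑ z ∈ t, C * (∫ v, ‖𝓕 (θ z) v‖) + 1, by positivity, fun f hf x => ?_⟩
  set M := sSup ((fun p => ‖f p‖) '' {x | ⟪x, u⟫ ∈ H}) with hM
  have hM0 : 0 ≤ M := Real.sSup_nonneg (by rintro _ ⟨x, -, rfl⟩; exact norm_nonneg _)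
  have hfM : ∀ x, ⟪x, u⟫ ∈ H → ‖f x‖ ≤ M := by
    obtain ⟨B, hB⟩ := hf.2.1
    exact fun x hx => le_csSup ⟨B, by rintro _ ⟨x, -, rfl⟩; exact hB x⟩ ⟨x, hx, rfl⟩
  have hpart : ∀ z, ‖∫ v, f (x + perp u v) * 𝓕 (θ z) v‖ ≤ C * ((∫ v, ‖𝓕 (θ z) v‖) * M) := by
    intro z
    have hmem := hf.average (hk z) (continuous_perp u) (hm z) (hmk z)
    obtain ⟨a, ha⟩ := exists_subset_Icc_of_sub_le (L := L)
      (T := (fun s => ⟪s, u⟫) '' (Ω ∩ tsupport fun s => θ z (perp u s))) (by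
        have hball : ∀ s, s ∈ tsupport (fun s => θ z (perp u s)) → dist (perp u s) z ≤ η / 4 :=
          fun s hs => (hθ z).2.2 (tsupport_comp_subset_preimage (θ z) (continuous_perp u) hs)
        rintro _ ⟨p, ⟨hp, hp'⟩, rfl⟩ _ ⟨q, ⟨hq, hq'⟩, rfl⟩
        refine hfib p hp q hq ?_
        linarith [dist_triangle_right (perp u p) (perp u q) z, hball p hp', hball q hq'])
    have hline := (hmem.comp_line (fun s hs => ha ⟨s, hs, rfl⟩) (perp u x)).modulate
      (-(a + L / 2)) (Ω' := Icc (-(L / 2)) (L / 2)) (fun s hs => by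
        constructor <;> linarith [hs.1, hs.2])
    have h := hS _ hline ((∫ v, ‖𝓕 (θ z) v‖) * M) (by positivity) (fun a ha => ?_) ⟪x, u⟫
    · simpa only [norm_mul, Complex.norm_exp_ofReal_mul_I, one_mul, perp_add_smul] using h
    · rw [norm_mul, Complex.norm_exp_ofReal_mul_I, one_mul]
      refine norm_integral_comp_add_mul_le (fun v => hfM _ ?_) (hk z)
      rwa [inner_add_left, inner_add_left, inner_perp_left hu, inner_perp_left hu,
        real_inner_smul_left, real_inner_self_eq_norm_sq, hu, one_pow, mul_one, zero_add, add_zero]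
  have hfi : ∀ z ∈ t, Integrable fun v => f (x + perp u v) * 𝓕 (θ z) v := fun z _ => by
    obtain ⟨B, hB⟩ := hf.2.1
    exact integrable_comp_add_mul hf.1 hB (hk z) (continuous_perp u) x
  have hself : ∑ z ∈ t, ∫ v, f (x + perp u v) * 𝓕 (θ z) v = f x := by
    suffices ∫ v, f (x + perp u v) * ∑ z ∈ t, 𝓕 (θ z) v = f x by
      simp only [Finset.mul_sum] at this
      rwa [integral_finsetSum _ hfi] at this
    refine hf.average_eq_self (k := fun v => ∑ z ∈ t, 𝓕 (θ z) v)
      (m := fun s => ∑ z ∈ t, θ z (perp u s)) (integrable_finsetSum _ fun z _ => hk z)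
      (continuous_perp u) (ContDiff.sum fun z _ => hm z) (fun s => ?_) ?_ x
    · simp only [Finset.mul_sum]
      rw [integral_finsetSum]
      · simp only [hmk]
      · exact fun z _ => (hk z).bdd_mul (c := 1)
          (by have := continuous_perp u; fun_prop : Continuous fun v : V =>
            Complex.exp (↑(2 * Real.pi * ⟪s, perp u v⟫) * Complex.I)).aestronglyMeasurable
          (ae_of_all _ fun v => (Complex.norm_exp_ofReal_mul_I _).le)
    · rw [← disjoint_iff_inter_eq_empty]
      refine Disjoint.mono_left (closure_minimal (t := (perp u ⁻¹' U)ᶜ) (fun s hs hsU => hs ?_)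
        (hU.preimage (continuous_perp u)).isClosed_compl) ?_
      · simp only [hsum _ hsU, sub_self]
      · rw [Set.disjoint_compl_left_iff_subset]
        exact fun s hs => hSU ⟨s, hs, rfl⟩
  calc ‖f x‖ ≤ ∑ z ∈ t, C * ((∫ v, ‖𝓕 (θ z) v‖) * M) := by
        rw [← hself]
        exact (norm_sum_le _ _).trans (Finset.sum_le_sum fun z _ => hpart z)
    _ = (∑ z ∈ t, C * (∫ v, ‖𝓕 (θ z) v‖)) * M := by
        rw [Finset.sum_mul]
        exact Finset.sum_congr rfl fun z _ => by ring
    _ ≤ _ := by gcongr; linarith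

theorem isSamplingSet_hyperplanes_iff {Ω : Set V} (hc : IsCompact Ω) (hΩ : Convex ℝ Ω)
    (hpos : 0 < volume Ω) {u : V} (hu : ‖u‖ = 1) {H : Set ℝ} (hH : UniformlyDiscrete H) :
    IsSamplingSet Ω {x | ⟪x, u⟫ ∈ H} ↔ lowerUniformDensity H • u ∉ Ω - Ω :=
  ⟨fun h => h.density_smul_notMem hΩ hc hpos hu hH,
    isSamplingSet_of_density_smul_notMem hc hΩ (nonempty_of_measure_ne_zero hpos.ne') hu hH⟩

/-- Higher-dimensional parallel hyperplanes: for `d ≥ 3`, `P = l + H·u_l` is a sampling set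
for `B_Ω` iff `D⁻(H)·u_l ∉ Ω − Ω`. -/
theorem parallel_hyperplanes_sampling
    (d : ℕ) (hd : 3 ≤ d)
    (Ω : Set (EuclideanSpace ℝ (Fin d))) (hΩcompact : IsCompact Ω) (hΩconvex : Convex ℝ Ω)
    (hΩpos : 0 < volume Ω)
    (u : EuclideanSpace ℝ (Fin d)) (hu : ‖u‖ = 1)
    (H : Set ℝ) (hH : UniformlyDiscrete H)
    (P : Set (EuclideanSpace ℝ (Fin d)))
    (hP : P = {x | ∃ a ∈ H, ∃ y : EuclideanSpace ℝ (Fin d), ⟪y, u⟫ = 0 ∧ x = y + a • u}) :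
    IsSamplingSet Ω P ↔ lowerUniformDensity H • u ∉ Ω - Ω := by
  have hPH : P = {x | ⟪x, u⟫ ∈ H} := by
    rw [hP]
    ext x
    constructor
    · rintro ⟨a, ha, y, hy, rfl⟩
      rw [Set.mem_ofPred_eq, inner_add_left, hy, real_inner_smul_left,
        real_inner_self_eq_norm_sq, hu]
      simpa using ha
    · exact fun hx => ⟨_, hx, perp u x, inner_perp_left hu x, (perp_add_smul u x).symm⟩
  rw [hPH]
  exact isSamplingSet_hyperplanes_iff hΩcompact hΩconvex hΩpos hu hH
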